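/- arXiv:math/0606420 — 2 statements merged into one kernel-verified Lean document; each statement's English description precedes it below -/
import Mathlib

section
/- Let (X, h_i, p_i) be a contracting-on-average iterated function system on a Polish space X (h_i Lipschitz, p_i Dini and bounded away from 0), with invariant measure ν. Let Σ̃ = {1,…,k}^ℤ with the two-sided left shift σ̃, let μ₊ be the measure on Σ = {1,…,k}^ℕ defined by μ₊(E) = ∫_X p_x(E) dν(x), and let μ be the unique σ̃-invariant Borel probability measure on Σ̃ whose marginal on the nonnegative coordinates equals μ₊. Then the measure-preserving system (Σ̃, σ̃, μ) is ergodic. -/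
open MeasureTheory Metric Filter ENNReal NNReal

noncomputable section

variable {k : ℕ}

/-- `hIter h ω n = h_{ω^n} = h_{ω (n-1)} ∘ ⋯ ∘ h_{ω 0}`. -/
def hIter {X : Type*} (h : Fin k → X → X) (ω : ℕ → Fin k) : ℕ → X → X
  | 0 => id
  | n + 1 => fun x => h (ω n) (hIter h ω n x)

/-- `pIter h p ω n x = p_{ω^n}(x) = ∏_{i=1}^n p_{ω_i}(h_{ω^{i-1}}(x))`. -/
def pIter {X : Type*} (h : Fin k → X → X) (p : Fin k → X → ℝ)
    (ω : ℕ → Fin k) : ℕ → X → ℝ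
  | 0 => fun _ => 1
  | n + 1 => fun x => pIter h p ω n x * p (ω n) (hIter h ω n x)

/-- The cylinder `C_{ω^n}` of sequences beginning with the first `n` symbols of `ω`. -/
def cyl (ω : ℕ → Fin k) (n : ℕ) : Set (ℕ → Fin k) := {τ | ∀ i < n, τ i = ω i}

/-- One-sided shift. -/
def sh (ω : ℕ → Fin k) : ℕ → Fin k := fun n => ω (n + 1)

/-- Prepend a symbol. -/
def scons (i : Fin k) (ω : ℕ → Fin k) : ℕ → Fin k
  | 0 => i
  | n + 1 => ω n

lemma sh_scons (i : Fin k) (ω : ℕ → Fin k) : sh (scons i ω) = ω := rfl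

lemma scons_sh (ω : ℕ → Fin k) : scons (ω 0) (sh ω) = ω := by
  funext n; cases n <;> rfl

lemma measurable_sh : Measurable (sh : (ℕ → Fin k) → _) :=
  measurable_pi_lambda _ fun n => measurable_pi_apply (n + 1)

lemma measurable_scons (i : Fin k) : Measurable (scons i) := by
  refine measurable_pi_lambda _ fun n => ?_
  cases n with
  | zero => exact measurable_const
  | succ n => exact measurable_pi_apply n

lemma measurableSet_cyl (ω : ℕ → Fin k) (n : ℕ) : MeasurableSet (cyl ω n) := by
  have : cyl ω n = ⋂ i, ⋂ (_ : i < n), (fun τ : ℕ → Fin k => τ i) ⁻¹' {ω i} := by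
    ext τ; simp [cyl]
  rw [this]
  exact MeasurableSet.iInter fun i => MeasurableSet.iInter fun _ =>
    measurable_pi_apply i (measurableSet_singleton _)

lemma cyl_zero (ω : ℕ → Fin k) : cyl ω 0 = Set.univ := by
  ext; simp [cyl]

lemma mem_cyl_self (ω : ℕ → Fin k) (n : ℕ) : ω ∈ cyl ω n := fun _ _ => rfl

lemma cyl_eq_of_mem {ω τ : ℕ → Fin k} {n : ℕ} (hτ : τ ∈ cyl ω n) : cyl τ n = cyl ω n := by
  ext σ
  constructor
  · intro hσ i hi; rw [hσ i hi, hτ i hi]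
  · intro hσ i hi; rw [hσ i hi, hτ i hi]

lemma cyl_anti (ω : ℕ → Fin k) {n m : ℕ} (hnm : n ≤ m) : cyl ω m ⊆ cyl ω n :=
  fun _ hτ i hi => hτ i (hi.trans_le hnm)

/-- The set of cylinders. -/
def cyls (k : ℕ) : Set (Set (ℕ → Fin k)) := {s | ∃ ω n, s = cyl ω n}

lemma isPiSystem_cyls : IsPiSystem (cyls k) := by
  rintro _ ⟨ω, n, rfl⟩ _ ⟨τ, m, rfl⟩ ⟨σ, h1, h2⟩
  rw [← cyl_eq_of_mem h1, ← cyl_eq_of_mem h2]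
  rcases le_total n m with hnm | hnm
  · exact ⟨σ, m, Set.inter_eq_right.2 (cyl_anti σ hnm)⟩
  · exact ⟨σ, n, Set.inter_eq_left.2 (cyl_anti σ hnm)⟩

/-- A countable family of sequences realizing all finite words. -/
def ext0 (a : Fin k) (n : ℕ) (w : Fin n → Fin k) : ℕ → Fin k :=
  fun j => if hj : j < n then w ⟨j, hj⟩ else a

lemma mem_cyl_ext0 (a : Fin k) (n : ℕ) (w : Fin n → Fin k) (τ : ℕ → Fin k) :
    τ ∈ cyl (ext0 a n w) n ↔ (fun j : Fin n => τ j) = w := by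
  constructor
  · intro hτ; funext j; rw [hτ j j.2]; simp [ext0]
  · rintro rfl i hi; simp [ext0, hi]

lemma generateFrom_cyls :
    (inferInstance : MeasurableSpace (ℕ → Fin k)) = MeasurableSpace.generateFrom (cyls k) := by
  apply le_antisymm
  · refine iSup_le fun i => ?_
    rintro _ ⟨S, -, rfl⟩
    have : (fun τ : ℕ → Fin k => τ i) ⁻¹' S
        = ⋃ a : Fin k, ⋃ w : Fin (i + 1) → Fin k, ⋃ (_ : w (Fin.last i) ∈ S),
          cyl (ext0 a (i + 1) w) (i + 1) := by
      ext τ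
      simp only [Set.mem_preimage, Set.mem_iUnion, mem_cyl_ext0, exists_prop]
      constructor
      · intro hτ; exact ⟨τ 0, _, by simpa using hτ, rfl⟩
      · rintro ⟨a, w, hw, rfl⟩; simpa using hw
    rw [this]
    exact MeasurableSet.iUnion fun a => MeasurableSet.iUnion fun w => MeasurableSet.iUnion fun _ =>
      MeasurableSpace.measurableSet_generateFrom ⟨_, _, rfl⟩
  · refine MeasurableSpace.generateFrom_le ?_
    rintro _ ⟨ω, n, rfl⟩
    exact measurableSet_cyl ω n

lemma meas_ext_cyl [Nonempty (Fin k)] (m₁ m₂ : Measure (ℕ → Fin k)) [IsFiniteMeasure m₁]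
    (H : ∀ ω n, m₁ (cyl ω n) = m₂ (cyl ω n)) : m₁ = m₂ := by
  refine ext_of_generate_finite _ generateFrom_cyls isPiSystem_cyls ?_ ?_
  · rintro _ ⟨ω, n, rfl⟩; exact H ω n
  · have := H (fun _ => Classical.arbitrary _) 0
    simpa [cyl_zero] using this

lemma meas_le_cyl [Nonempty (Fin k)] (m₁ m₂ : Measure (ℕ → Fin k)) [IsFiniteMeasure m₂]
    (H : ∀ ω n, m₁ (cyl ω n) ≤ m₂ (cyl ω n)) (E : Set (ℕ → Fin k)) : m₁ E ≤ m₂ E := by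
  have a : Fin k := Classical.arbitrary _
  have hopen : ∀ U : Set (ℕ → Fin k), IsOpen U → m₁ U ≤ m₂ U := by
    intro U hU
    have hUU : U = ⋃ n, {τ | cyl τ n ⊆ U} := by
      ext τ
      simp only [Set.mem_iUnion, Set.mem_ofPred_eq]
      constructor
      · intro hτ
        obtain ⟨I, u, hu, hsub⟩ := isOpen_pi_iff.1 hU τ hτ
        refine ⟨I.sup id + 1, fun σ hσ => hsub ?_⟩
        intro i hi
        have : σ i = τ i := hσ i (Nat.lt_succ_of_le (Finset.le_sup (f := id) hi))
        rw [this]; exact (hu i hi).2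
      · rintro ⟨n, hn⟩; exact hn (mem_cyl_self τ n)
    have hmono : Monotone fun n => {τ : ℕ → Fin k | cyl τ n ⊆ U} := by
      intro n m hnm τ hτ
      exact (cyl_anti τ hnm).trans hτ
    have key : ∀ n, ∃ S : Finset (Fin n → Fin k),
        {τ : ℕ → Fin k | cyl τ n ⊆ U} = ⋃ w ∈ S, cyl (ext0 a n w) n := by
      intro n
      classical
      refine ⟨Finset.univ.filter fun w => cyl (ext0 a n w) n ⊆ U, ?_⟩
      ext τ
      simp only [Set.mem_ofPred_eq, Finset.mem_filter, Finset.mem_univ, true_and, Set.mem_iUnion,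
        exists_prop]
      constructor
      · intro hτ
        have h2 : τ ∈ cyl (ext0 a n fun j : Fin n => τ j) n := (mem_cyl_ext0 _ _ _ _).2 rfl
        exact ⟨_, by rwa [← cyl_eq_of_mem h2], h2⟩
      · rintro ⟨w, hw, hτ⟩
        rwa [cyl_eq_of_mem hτ]
    have hd : ∀ n (S : Finset (Fin n → Fin k)),
        (S : Set (Fin n → Fin k)).PairwiseDisjoint fun w => cyl (ext0 a n w) n := by
      intro n S w _ w' _ hne
      refine Set.disjoint_left.2 fun τ h1 h2 => hne ?_
      rw [mem_cyl_ext0] at h1 h2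
      rw [← h1, ← h2]
    rw [hUU, hmono.measure_iUnion, hmono.measure_iUnion]
    refine iSup_mono fun n => ?_
    obtain ⟨S, hS⟩ := key n
    rw [hS, measure_biUnion_finset (hd n S) (fun _ _ => measurableSet_cyl _ _),
      measure_biUnion_finset (hd n S) (fun _ _ => measurableSet_cyl _ _)]
    exact Finset.sum_le_sum fun w _ => H _ _
  rw [E.measure_eq_iInf_isOpen m₂]
  refine le_iInf fun U => le_iInf fun hEU => le_iInf fun hU => ?_
  exact (measure_mono hEU).trans (hopen U hU)

section markov
variable {X : Type*} (h : Fin k → X → X) (p : Fin k → X → ℝ)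

lemma hIter_succ' (ω : ℕ → Fin k) (n : ℕ) (x : X) :
    hIter h ω (n + 1) x = hIter h (sh ω) n (h (ω 0) x) := by
  induction n with
  | zero => rfl
  | succ n ih =>
    change h (ω (n + 1)) (hIter h ω (n + 1) x) = h (sh ω n) (hIter h (sh ω) n (h (ω 0) x))
    rw [ih]; rfl

lemma pIter_succ' (ω : ℕ → Fin k) (n : ℕ) (x : X) :
    pIter h p ω (n + 1) x = p (ω 0) x * pIter h p (sh ω) n (h (ω 0) x) := by
  induction n with
  | zero => simp [pIter, hIter]
  | succ n ih =>
    change pIter h p ω (n + 1) x * p (ω (n + 1)) (hIter h ω (n + 1) x) =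
      p (ω 0) x * (pIter h p (sh ω) n (h (ω 0) x) * p (sh ω n) (hIter h (sh ω) n (h (ω 0) x)))
    rw [ih, hIter_succ', mul_assoc]; rfl

lemma hIter_congr {ω τ : ℕ → Fin k} {n : ℕ} (hτ : τ ∈ cyl ω n) (x : X) :
    hIter h τ n x = hIter h ω n x := by
  induction n with
  | zero => rfl
  | succ n ih =>
    change h (τ n) _ = h (ω n) _
    rw [ih (cyl_anti ω (Nat.le_succ n) hτ), hτ n (Nat.lt_succ_self n)]

lemma preimage_scons_cyl (i : Fin k) (ω : ℕ → Fin k) (n : ℕ) :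
    scons i ⁻¹' cyl ω (n + 1) = if i = ω 0 then cyl (sh ω) n else ∅ := by
  split_ifs with hi
  · ext τ
    constructor
    · intro hτ j hj; exact hτ (j + 1) (Nat.succ_lt_succ hj)
    · intro hτ j hj
      cases j with
      | zero => exact hi
      | succ j => exact hτ j (Nat.lt_of_succ_lt_succ hj)
  · ext τ
    simp only [Set.mem_preimage, Set.mem_empty_iff_false, iff_false]
    intro hτ; exact hi (hτ 0 (Nat.succ_pos n))

lemma P_markov [Nonempty (Fin k)] (hp0 : ∀ i x, 0 ≤ p i x) (hpsum : ∀ x, ∑ i, p i x = 1)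
    (P : X → Measure (ℕ → Fin k)) (hPprob : ∀ x, IsProbabilityMeasure (P x))
    (hPcyl : ∀ x ω n, P x (cyl ω n) = ENNReal.ofReal (pIter h p ω n x)) (x : X) :
    P x = ∑ i, ENNReal.ofReal (p i x) • (P (h i x)).map (scons i) := by
  have : ∀ x, IsProbabilityMeasure (P x) := hPprob
  refine meas_ext_cyl _ _ fun ω n => ?_
  simp only [Measure.coe_finsetSum, Finset.sum_apply, Measure.smul_apply, smul_eq_mul]
  simp_rw [Measure.map_apply (measurable_scons _) (measurableSet_cyl ω n)]
  cases n with
  | zero =>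
    simp only [cyl_zero, Set.preimage_univ, measure_univ, mul_one]
    rw [← ENNReal.ofReal_sum_of_nonneg fun i _ => hp0 i x, hpsum, ENNReal.ofReal_one]
  | succ n =>
    simp_rw [preimage_scons_cyl]
    rw [Finset.sum_eq_single (ω 0)]
    · rw [if_pos rfl, hPcyl, hPcyl, pIter_succ', ENNReal.ofReal_mul (hp0 _ _)]
    · intro i _ hi; simp [hi]
    · simp

lemma P_markov_apply (P : X → Measure (ℕ → Fin k))
    (hM : ∀ x, P x = ∑ i, ENNReal.ofReal (p i x) • (P (h i x)).map (scons i)) (x : X)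
    {E : Set (ℕ → Fin k)} (hE : MeasurableSet E) :
    P x E = ∑ i, ENNReal.ofReal (p i x) * P (h i x) (scons i ⁻¹' E) := by
  conv_lhs => rw [hM x]
  simp only [Measure.coe_finsetSum, Finset.sum_apply, Measure.smul_apply, smul_eq_mul]
  simp_rw [Measure.map_apply (measurable_scons _) hE]

lemma P_cyl_inter (P : X → Measure (ℕ → Fin k)) (hp0 : ∀ i x, 0 ≤ p i x)
    (hM : ∀ x, P x = ∑ i, ENNReal.ofReal (p i x) • (P (h i x)).map (scons i))
    {A : Set (ℕ → Fin k)} (hA : MeasurableSet A) (hAi : sh ⁻¹' A = A) (n : ℕ) :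
    ∀ (ω : ℕ → Fin k) (x : X), P x (cyl ω n ∩ A)
      = ENNReal.ofReal (pIter h p ω n x) * P (hIter h ω n x) A := by
  have hAc : ∀ i, scons i ⁻¹' A = A := by
    intro i
    conv_lhs => rw [← hAi]
    rfl
  induction n with
  | zero => intro ω x; simp [cyl_zero, pIter, hIter]
  | succ n ih =>
    intro ω x
    rw [P_markov_apply h p P hM x ((measurableSet_cyl _ _).inter hA)]
    simp_rw [Set.preimage_inter, preimage_scons_cyl, hAc]
    rw [Finset.sum_eq_single (ω 0)]
    · rw [if_pos rfl, ih, hIter_succ', pIter_succ', ENNReal.ofReal_mul (hp0 _ _), mul_assoc]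
    · intro i _ hi; simp [hi]
    · simp

/-- Measurability of functions depending on finitely many coordinates. -/
lemma measurable_of_cyl {Y : Type*} [MeasurableSpace Y] (F : (ℕ → Fin k) → Y) (n : ℕ)
    (hF : ∀ ω τ, τ ∈ cyl ω n → F τ = F ω) : Measurable F := by
  rcases isEmpty_or_nonempty (Fin k) with he | hne
  · exact measurable_of_empty _
  have a : Fin k := Classical.arbitrary _
  have : F = (fun w : Fin n → Fin k => F (ext0 a n w)) ∘ (fun ω j => ω j) := by
    funext ω
    exact hF _ _ ((mem_cyl_ext0 _ _ _ _).2 rfl)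
  rw [this]
  exact (measurable_of_finite _).comp (measurable_pi_lambda _ fun j => measurable_pi_apply _)

end markov

/-! Analytic lemmas -/

lemma dini_summable (w : ℝ → ℝ) (hw : Monotone w) (hw0 : 0 ≤ w 0)
    (hs : Summable fun n : ℕ => w ((1 / 2 : ℝ) ^ (n + 1))) (C s : ℝ) (hC : 0 ≤ C)
    (hs0 : 0 ≤ s) (hs1 : s < 1) : Summable fun n : ℕ => w (C * s ^ n) := by
  have hwn : ∀ t, 0 ≤ t → 0 ≤ w t := fun t ht => hw0.trans (hw ht)
  obtain ⟨m, hm⟩ := exists_pow_lt_of_lt_one (show (0 : ℝ) < 1 / 2 by norm_num) hs1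
  have hm0 : m ≠ 0 := by rintro rfl; norm_num at hm
  obtain ⟨q, hq⟩ := exists_pow_lt_of_lt_one (show (0 : ℝ) < 1 / (C + 1) by positivity)
    (show (1 / 2 : ℝ) < 1 by norm_num)
  have hq' : C * (1 / 2) ^ q ≤ 1 := by
    rw [lt_div_iff₀ (by positivity)] at hq
    nlinarith [pow_pos (show (0 : ℝ) < 1 / 2 by norm_num) q]
  have : NeZero m := ⟨hm0⟩
  have hdiv : Summable fun n : ℕ => w ((1 / 2 : ℝ) ^ (n / m + 1)) := by
    have h1 : Summable fun z : ℕ × Fin m => w ((1 / 2 : ℝ) ^ (z.1 + 1)) * (1 : ℝ) := by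
      refine Summable.mul_of_nonneg (f := fun n : ℕ => w ((1 / 2 : ℝ) ^ (n + 1)))
        (g := fun _ : Fin m => (1 : ℝ)) hs (hasSum_fintype _).summable ?_ ?_
      · intro n; exact hwn _ (by positivity)
      · intro n; norm_num
    have h2 := (Nat.divModEquiv m).summable_iff.2 h1
    refine h2.congr fun n => ?_
    simp [Nat.divModEquiv]
  rw [← _root_.summable_nat_add_iff (m * (q + 1))]
  refine Summable.of_nonneg_of_le (fun n => hwn _ (by positivity)) (fun n => hw ?_) hdiv
  have e : n + m * (q + 1) = m * (n / m) + n % m + m * q + m := by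
    have := Nat.div_add_mod n m
    rw [this]; ring
  have hsm : s ^ m ≤ 1 / 2 := hm.le
  have b1 : s ^ (m * (n / m)) ≤ (1 / 2) ^ (n / m) := by
    rw [pow_mul]; exact pow_le_pow_left₀ (by positivity) hsm _
  have b2 : s ^ (n % m) ≤ 1 := pow_le_one₀ hs0 hs1.le
  have b3 : s ^ (m * q) ≤ (1 / 2) ^ q := by
    rw [pow_mul]; exact pow_le_pow_left₀ (by positivity) hsm _
  calc C * s ^ (n + m * (q + 1))
      = C * (s ^ (m * (n / m)) * s ^ (n % m) * s ^ (m * q) * s ^ m) := by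
        rw [e, pow_add, pow_add, pow_add]
    _ ≤ C * ((1 / 2) ^ (n / m) * 1 * (1 / 2) ^ q * (1 / 2)) := by gcongr
    _ = (C * (1 / 2) ^ q) * (1 / 2) ^ (n / m + 1) := by ring
    _ ≤ 1 * (1 / 2) ^ (n / m + 1) := by gcongr
    _ = _ := by ring

lemma frac_moment {X : Type*} [MetricSpace X] (h : Fin k → X → X) (p : Fin k → X → ℝ)
    (hlip : ∀ i, ∃ L : ℝ≥0, LipschitzWith L (h i))
    (δ : ℝ) (hδ : 0 < δ) (hδ1 : δ ≤ 1) (hpδ : ∀ i x, δ ≤ p i x)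
    (hpsum : ∀ x, ∑ i, p i x = 1)
    (b : ℝ) (hb : 0 < b) (hcoa : ∀ x y, x ≠ y →
      ∑ j, p j x * Real.log (dist (h j x) (h j y) / dist x y) < -b) :
    ∃ α > (0 : ℝ), ∃ r : ℝ, 0 < r ∧ r < 1 ∧ ∀ x y,
      ∑ j, p j x * dist (h j x) (h j y) ^ α ≤ r * dist x y ^ α := by
  choose L hL using hlip
  let L' : ℝ := 1 + ∑ i, (L i : ℝ)
  have hL'1 : 1 ≤ L' := by
    have : 0 ≤ ∑ i, (L i : ℝ) := Finset.sum_nonneg fun i _ => (L i).2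
    simp only [L']; linarith
  have hLL : ∀ i, (L i : ℝ) ≤ L' := by
    intro i
    have := Finset.single_le_sum (f := fun i => (L i : ℝ)) (fun i _ => (L i).2) (Finset.mem_univ i)
    simp only [L']; linarith
  set l : ℝ := Real.log L' with hl
  have hl0 : 0 ≤ l := Real.log_nonneg hL'1
  set M : ℝ := (l + b) / δ with hMdef
  have hδM : δ * M = l + b := by rw [hMdef]; field_simp
  have hM0 : 0 < M := by rw [hMdef]; positivity
  have hMb : l + b ≤ M := by nlinarith
  set α : ℝ := b / (2 * M ^ 2) with hα
  have hα0 : 0 < α := by positivity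
  have hαM2 : α * M ^ 2 = b / 2 := by rw [hα]; field_simp
  have hαM : α * M ≤ 1 / 2 := by
    have : α * M = b / (2 * M) := by rw [hα]; field_simp
    rw [this, div_le_iff₀ (by positivity)]; linarith
  have hαb : α * b ≤ 1 / 2 := by nlinarith
  refine ⟨α, hα0, 1 - α * b / 2, by linarith, by nlinarith, fun x y => ?_⟩
  rcases eq_or_ne x y with rfl | hxy
  · simp [Real.zero_rpow hα0.ne']
  have hd : 0 < dist x y := dist_pos.2 hxy
  set ρ : Fin k → ℝ := fun j => dist (h j x) (h j y) / dist x y with hρ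
  have hρ0 : ∀ j, 0 ≤ ρ j := fun j => by simp only [hρ]; positivity
  have hρL : ∀ j, ρ j ≤ L' := by
    intro j
    simp only [hρ]
    rw [div_le_iff₀ hd]
    exact ((hL j).dist_le_mul x y).trans (by gcongr; exact hLL j)
  have hlog : ∀ j, Real.log (ρ j) ≤ l := by
    intro j
    rcases (hρ0 j).eq_or_lt with h0 | h0
    · rw [← h0, Real.log_zero]; exact hl0
    · exact Real.log_le_log h0 (hρL j)
  have hp0 : ∀ j, 0 ≤ p j x := fun j => hδ.le.trans (hpδ j x)
  set t : Fin k → ℝ := fun j => max (Real.log (ρ j)) (-M) with ht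
  have htl : ∀ j, t j ≤ l := fun j => max_le (hlog j) (by linarith)
  have htM : ∀ j, |t j| ≤ M := fun j => abs_le.2 ⟨le_max_right _ _, (htl j).trans (by linarith)⟩
  have hsum : ∑ j, p j x * t j ≤ -b := by
    by_cases hall : ∀ j, -M ≤ Real.log (ρ j)
    · have : ∀ j, t j = Real.log (ρ j) := fun j => max_eq_left (hall j)
      simp_rw [this]
      exact (hcoa x y hxy).le
    · push Not at hall
      obtain ⟨j₀, hj₀⟩ := hall
      have htj : t j₀ = -M := max_eq_right hj₀.le
      have h1 : ∑ j, p j x * t j ≤ ∑ j, (p j x * l + if j = j₀ then -(p j₀ x * (l + M)) else 0) := by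
        refine Finset.sum_le_sum fun j _ => ?_
        split_ifs with hj
        · subst hj; rw [htj]; linarith
        · rw [add_zero]; exact mul_le_mul_of_nonneg_left (htl j) (hp0 j)
      rw [Finset.sum_add_distrib, ← Finset.sum_mul, hpsum, Finset.sum_ite_eq' Finset.univ j₀] at h1
      simp only [Finset.mem_univ, if_true] at h1
      have : δ * M ≤ p j₀ x * (l + M) :=
        mul_le_mul (hpδ _ _) (by linarith) hM0.le (hp0 _)
      linarith
  have hpow : ∀ j, ρ j ^ α ≤ 1 + α * t j + (α * M) ^ 2 := by
    intro j
    have h1 : ρ j ^ α ≤ Real.exp (α * t j) := by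
      rcases (hρ0 j).eq_or_lt with h0 | h0
      · rw [← h0, Real.zero_rpow hα0.ne']; positivity
      · rw [Real.rpow_def_of_pos h0, mul_comm]
        exact Real.exp_le_exp.2 (mul_le_mul_of_nonneg_left (le_max_left _ _) hα0.le)
    have h2 : |α * t j| ≤ α * M := by
      rw [abs_mul, abs_of_pos hα0]; exact mul_le_mul_of_nonneg_left (htM j) hα0.le
    have h3 := (abs_le.1 (Real.abs_exp_sub_one_sub_id_le (h2.trans (by linarith)))).2
    have h4 : (α * t j) ^ 2 ≤ (α * M) ^ 2 := sq_le_sq' (abs_le.1 h2).1 (abs_le.1 h2).2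
    linarith
  have hfin : ∑ j, p j x * ρ j ^ α ≤ 1 - α * b / 2 := by
    calc ∑ j, p j x * ρ j ^ α ≤ ∑ j, p j x * (1 + α * t j + (α * M) ^ 2) :=
          Finset.sum_le_sum fun j _ => mul_le_mul_of_nonneg_left (hpow j) (hp0 j)
      _ = (∑ j, p j x) * (1 + (α * M) ^ 2) + α * ∑ j, p j x * t j := by
          rw [Finset.sum_mul, Finset.mul_sum, ← Finset.sum_add_distrib]
          exact Finset.sum_congr rfl fun j _ => by ring
      _ ≤ 1 * (1 + (α * M) ^ 2) + α * (-b) := by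
          rw [hpsum]; gcongr
      _ = 1 + α * (α * M ^ 2) - α * b := by ring
      _ = 1 - α * b / 2 := by rw [hαM2]; ring
  calc ∑ j, p j x * dist (h j x) (h j y) ^ α = (∑ j, p j x * ρ j ^ α) * dist x y ^ α := by
        rw [Finset.sum_mul]
        refine Finset.sum_congr rfl fun j _ => ?_
        rw [mul_assoc, ← Real.mul_rpow (hρ0 j) hd.le]
        simp only [hρ]
        rw [div_mul_cancel₀ _ hd.ne']
    _ ≤ _ := by gcongr

section nonsing
variable {X : Type*} [MetricSpace X] (h : Fin k → X → X) (p : Fin k → X → ℝ)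

lemma measurable_distIter (x y : X) (n : ℕ) (g : ℝ → ℝ) :
    Measurable fun ω : ℕ → Fin k => g (dist (hIter h ω n x) (hIter h ω n y)) :=
  measurable_of_cyl _ n fun ω τ hτ => by rw [hIter_congr h hτ, hIter_congr h hτ]

lemma lint_dist (P : X → Measure (ℕ → Fin k)) (hPprob : ∀ x, IsProbabilityMeasure (P x))
    (hp0 : ∀ i x, 0 ≤ p i x)
    (hM : ∀ x, P x = ∑ i, ENNReal.ofReal (p i x) • (P (h i x)).map (scons i))
    (α r : ℝ) (hr : 0 < r)
    (hfm : ∀ x y, ∑ j, p j x * dist (h j x) (h j y) ^ α ≤ r * dist x y ^ α) (n : ℕ) :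
    ∀ x y, ∫⁻ ω, ENNReal.ofReal (dist (hIter h ω n x) (hIter h ω n y) ^ α) ∂(P x)
      ≤ ENNReal.ofReal (r ^ n * dist x y ^ α) := by
  have : ∀ x, IsProbabilityMeasure (P x) := hPprob
  induction n with
  | zero => intro x y; simp [hIter]
  | succ n ih =>
    intro x y
    have hmeas : Measurable fun ω : ℕ → Fin k =>
        ENNReal.ofReal (dist (hIter h ω (n + 1) x) (hIter h ω (n + 1) y) ^ α) :=
      (measurable_distIter h x y (n + 1) (fun t => t ^ α)).ennreal_ofReal
    rw [hM x, lintegral_finsetSum_measure]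
    simp_rw [lintegral_smul_measure, lintegral_map hmeas (measurable_scons _), hIter_succ',
      sh_scons, smul_eq_mul]
    calc ∑ i, ENNReal.ofReal (p i x) * ∫⁻ ω, ENNReal.ofReal
          (dist (hIter h ω n (h i x)) (hIter h ω n (h i y)) ^ α) ∂(P (h i x))
        ≤ ∑ i, ENNReal.ofReal (p i x) * ENNReal.ofReal (r ^ n * dist (h i x) (h i y) ^ α) := by
          gcongr; exact ih _ _
      _ = ENNReal.ofReal (r ^ n * ∑ i, p i x * dist (h i x) (h i y) ^ α) := by
          rw [Finset.mul_sum, ENNReal.ofReal_sum_of_nonneg]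
          · refine Finset.sum_congr rfl fun i _ => ?_
            rw [← ENNReal.ofReal_mul (hp0 i x)]; congr 1; ring
          · intro i _; have := hp0 i x; positivity
      _ ≤ _ := by
          refine ENNReal.ofReal_le_ofReal ?_
          rw [pow_succ, mul_assoc]; gcongr; exact hfm x y

lemma exists_good (P : X → Measure (ℕ → Fin k)) (hPprob : ∀ x, IsProbabilityMeasure (P x))
    (hp0 : ∀ i x, 0 ≤ p i x)
    (hM : ∀ x, P x = ∑ i, ENNReal.ofReal (p i x) • (P (h i x)).map (scons i))
    (α r : ℝ) (hα : 0 < α) (hr : 0 < r) (hr1 : r < 1)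
    (hfm : ∀ x y, ∑ j, p j x * dist (h j x) (h j y) ^ α ≤ r * dist x y ^ α) (x y : X) :
    ∃ C s : ℝ, 0 ≤ C ∧ 0 ≤ s ∧ s < 1 ∧ P x {ω | ∀ n, dist (hIter h ω n x) (hIter h ω n y)
      ≤ C * s ^ n} ≠ 0 := by
  have : ∀ x, IsProbabilityMeasure (P x) := hPprob
  set q := Real.sqrt r with hq
  have hq0 : 0 < q := Real.sqrt_pos.2 hr
  have hqq : q * q = r := Real.mul_self_sqrt hr.le
  have hq1 : q < 1 := by nlinarith
  set D := dist x y ^ α with hD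
  have hD0 : 0 ≤ D := by positivity
  set T : ℝ := 2 * (D + 1) / (1 - q) with hT
  have h1q : 0 < 1 - q := by linarith
  have hT0 : 0 < T := by positivity
  have hDT : D / T * (1 - q)⁻¹ ≤ 1 / 2 := by
    rw [hT]; field_simp; linarith
  refine ⟨T ^ α⁻¹, q ^ α⁻¹, by positivity, by positivity,
    Real.rpow_lt_one hq0.le hq1 (by positivity), ?_⟩
  set G := {ω : ℕ → Fin k | ∀ n, dist (hIter h ω n x) (hIter h ω n y)
      ≤ T ^ α⁻¹ * (q ^ α⁻¹) ^ n} with hG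
  have hcompl : Gᶜ ⊆ ⋃ n, {ω | ENNReal.ofReal (T * q ^ n) ≤
      ENNReal.ofReal (dist (hIter h ω n x) (hIter h ω n y) ^ α)} := by
    intro ω hω
    simp only [hG, Set.mem_compl_iff, Set.mem_ofPred_eq, not_forall, not_le] at hω
    obtain ⟨n, hn⟩ := hω
    refine Set.mem_iUnion.2 ⟨n, ?_⟩
    refine ENNReal.ofReal_le_ofReal ?_
    have h1 := Real.rpow_le_rpow (by positivity) hn.le hα.le
    refine le_trans (le_of_eq ?_) h1
    rw [Real.mul_rpow (by positivity) (by positivity), ← Real.rpow_mul hT0.le,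
      inv_mul_cancel₀ hα.ne', Real.rpow_one, ← Real.rpow_natCast (q ^ α⁻¹) n,
      ← Real.rpow_mul hq0.le, ← Real.rpow_mul hq0.le]
    congr 1
    rw [← Real.rpow_natCast]
    congr 1
    field_simp
  have hb : ∀ n, P x {ω | ENNReal.ofReal (T * q ^ n) ≤
      ENNReal.ofReal (dist (hIter h ω n x) (hIter h ω n y) ^ α)} ≤ ENNReal.ofReal (D / T * q ^ n) := by
    intro n
    have hmeas : Measurable fun ω : ℕ → Fin k =>
        ENNReal.ofReal (dist (hIter h ω n x) (hIter h ω n y) ^ α) :=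
      (measurable_distIter h x y n (fun t => t ^ α)).ennreal_ofReal
    have h1 := (mul_meas_ge_le_lintegral (μ := P x) hmeas (ENNReal.ofReal (T * q ^ n))).trans
      (lint_dist h p P hPprob hp0 hM α r hr hfm n x y)
    have hTq : 0 < T * q ^ n := by positivity
    rw [mul_comm, ← ENNReal.le_div_iff_mul_le (Or.inl (by simpa using hTq)) (Or.inl (by simp)),
      ← ENNReal.ofReal_div_of_pos hTq] at h1
    refine h1.trans (le_of_eq ?_)
    congr 1
    rw [← hqq, mul_pow, ← hD]
    field_simp
  have hle : P x Gᶜ ≤ ENNReal.ofReal (1 / 2) := by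
    calc P x Gᶜ ≤ ∑' n, ENNReal.ofReal (D / T * q ^ n) :=
          (measure_mono hcompl).trans ((measure_iUnion_le _).trans (ENNReal.tsum_le_tsum hb))
      _ = ENNReal.ofReal (∑' n, D / T * q ^ n) := by
          rw [ENNReal.ofReal_tsum_of_nonneg (fun n => by positivity)]
          exact (summable_geometric_of_lt_one hq0.le hq1).mul_left _
      _ ≤ _ := by
          rw [_root_.tsum_mul_left, tsum_geometric_of_lt_one hq0.le hq1]
          exact ENNReal.ofReal_le_ofReal hDT
  intro h0
  have h1 : (1 : ℝ≥0∞) ≤ P x G + P x Gᶜ := by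
    rw [← measure_univ (μ := P x), ← Set.union_compl_self G]
    exact measure_union_le _ _
  rw [h0, zero_add] at h1
  have h2 := h1.trans hle
  rw [← ENNReal.ofReal_one, ENNReal.ofReal_le_ofReal_iff (by norm_num)] at h2
  norm_num at h2

lemma nonsing [Nonempty (Fin k)] (P : X → Measure (ℕ → Fin k))
    (hPprob : ∀ x, IsProbabilityMeasure (P x))
    (δ : ℝ) (hδ : 0 < δ) (hpδ : ∀ i x, δ ≤ p i x)
    (hdini : ∀ i, ∃ w : ℝ → ℝ, Monotone w ∧
      (∀ x y : X, |p i x - p i y| ≤ w (dist x y)) ∧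
      Summable fun n : ℕ => w ((1 / 2 : ℝ) ^ (n + 1)))
    (hPcyl : ∀ x ω n, P x (cyl ω n) = ENNReal.ofReal (pIter h p ω n x))
    (x y : X) (C s : ℝ) (hC : 0 ≤ C) (hs0 : 0 ≤ s) (hs1 : s < 1)
    (hG : P x {ω | ∀ n, dist (hIter h ω n x) (hIter h ω n y) ≤ C * s ^ n} ≠ 0)
    (A : Set (ℕ → Fin k)) (hA : MeasurableSet A) (hx : P x Aᶜ = 0) (hy : P y A = 0) : False := by
  have : ∀ x, IsProbabilityMeasure (P x) := hPprob
  choose w hwm hwd hws using hdini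
  have hp0 : ∀ i x, 0 ≤ p i x := fun i x => hδ.le.trans (hpδ i x)
  have hw0 : ∀ i, 0 ≤ w i 0 := fun i => by simpa using hwd i x x
  have hwn : ∀ i t, 0 ≤ t → 0 ≤ w i t := fun i t ht => (hw0 i).trans (hwm i ht)
  let W : ℕ → ℝ := fun n => (∑ i, w i (C * s ^ n)) / δ
  have hW0 : ∀ n, 0 ≤ W n := fun n =>
    div_nonneg (Finset.sum_nonneg fun i _ => hwn i _ (by positivity)) hδ.le
  have hWs : Summable W := Summable.div_const
    (summable_sum fun i _ => dini_summable (w i) (hwm i) (hw0 i) (hws i) C s hC hs0 hs1) δ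
  set G := {ω : ℕ → Fin k | ∀ n, dist (hIter h ω n x) (hIter h ω n y) ≤ C * s ^ n} with hGdef
  have hpI0 : ∀ ω n z, 0 ≤ pIter h p ω n z := by
    intro ω n z
    induction n with
    | zero => simp [pIter]
    | succ n ih => exact mul_nonneg ih (hp0 _ _)
  have hcmp : ∀ ω ∈ G, ∀ n, pIter h p ω n x
      ≤ Real.exp (∑ m ∈ Finset.range n, W m) * pIter h p ω n y := by
    intro ω hω n
    induction n with
    | zero => simp [pIter]
    | succ n ih =>
      rw [Finset.sum_range_succ, Real.exp_add]
      change pIter h p ω n x * p (ω n) (hIter h ω n x)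
        ≤ _ * (pIter h p ω n y * p (ω n) (hIter h ω n y))
      have h1 : p (ω n) (hIter h ω n x) ≤ Real.exp (W n) * p (ω n) (hIter h ω n y) := by
        have a1 := (abs_le.1 (hwd (ω n) (hIter h ω n x) (hIter h ω n y))).2
        have a2 : w (ω n) (dist (hIter h ω n x) (hIter h ω n y)) ≤ w (ω n) (C * s ^ n) :=
          hwm _ (hω n)
        have a3 : w (ω n) (C * s ^ n) ≤ ∑ i, w i (C * s ^ n) :=
          Finset.single_le_sum (f := fun i => w i (C * s ^ n))
            (fun i _ => hwn i _ (by positivity)) (Finset.mem_univ _)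
        have a4 : ∑ i, w i (C * s ^ n) = W n * δ := by simp only [W]; field_simp
        have a5 := Real.add_one_le_exp (W n)
        have a6 := hpδ (ω n) (hIter h ω n y)
        have a7 := mul_le_mul_of_nonneg_left a6 (hW0 n)
        have a8 := mul_le_mul_of_nonneg_right a5 (hp0 (ω n) (hIter h ω n y))
        linarith
      calc _ ≤ (Real.exp (∑ m ∈ Finset.range n, W m) * pIter h p ω n y) *
            (Real.exp (W n) * p (ω n) (hIter h ω n y)) :=
            mul_le_mul ih h1 (hp0 _ _) (mul_nonneg (by positivity) (hpI0 _ _ _))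
        _ = _ := by ring
  set K := Real.exp (∑' m, W m) with hK
  have hcmp' : ∀ ω ∈ G, ∀ n, pIter h p ω n x ≤ K * pIter h p ω n y := by
    intro ω hω n
    refine (hcmp ω hω n).trans (mul_le_mul_of_nonneg_right ?_ (hpI0 _ _ _))
    exact Real.exp_le_exp.2 (hWs.sum_le_tsum _ fun i _ => hW0 i)
  have hGm : MeasurableSet G := by
    have : G = ⋂ n, {ω : ℕ → Fin k | dist (hIter h ω n x) (hIter h ω n y) ≤ C * s ^ n} := by
      ext ω; simp [hGdef]
    rw [this]
    exact MeasurableSet.iInter fun n =>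
      measurableSet_le (measurable_distIter h x y n id) measurable_const
  have hfin : IsFiniteMeasure (ENNReal.ofReal K • P y) :=
    Measure.smul_finite _ ENNReal.ofReal_ne_top
  have hle := meas_le_cyl ((P x).restrict G) (ENNReal.ofReal K • P y) (by
    intro ω n
    rw [Measure.restrict_apply (measurableSet_cyl _ _), Measure.smul_apply, smul_eq_mul]
    rcases (cyl ω n ∩ G).eq_empty_or_nonempty with he | ⟨τ, hτ, hτG⟩
    · rw [he]; simp
    · refine (measure_mono Set.inter_subset_left).trans ?_
      rw [← cyl_eq_of_mem hτ, hPcyl, hPcyl, ← ENNReal.ofReal_mul (Real.exp_pos _).le]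
      exact ENNReal.ofReal_le_ofReal (hcmp' τ hτG n)) A
  rw [Measure.restrict_apply hA, Measure.smul_apply, hy, smul_zero, nonpos_iff_eq_zero] at hle
  apply hG
  refine measure_mono_null (t := (A ∩ G) ∪ Aᶜ) ?_ (measure_union_null hle hx)
  intro ω hω
  by_cases hωA : ω ∈ A
  · exact Or.inl ⟨hωA, hω⟩
  · exact Or.inr hωA

end nonsing

section onesided
variable {X : Type*} [MetricSpace X] [MeasurableSpace X] [BorelSpace X]
  (h : Fin k → X → X) (p : Fin k → X → ℝ)

lemma dini_continuous (f : X → ℝ) (w : ℝ → ℝ) (hw : Monotone w)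
    (hd : ∀ x y : X, |f x - f y| ≤ w (dist x y))
    (hs : Summable fun n : ℕ => w ((1 / 2 : ℝ) ^ (n + 1))) : Continuous f := by
  rw [Metric.continuous_iff]
  intro x ε hε
  have ht := hs.tendsto_atTop_zero
  obtain ⟨n, hn⟩ := (ht.eventually (gt_mem_nhds hε)).exists
  refine ⟨(1 / 2 : ℝ) ^ (n + 1), by positivity, fun y hy => ?_⟩
  rw [Real.dist_eq]
  exact (hd y x).trans_lt ((hw hy.le).trans_lt hn)

lemma measurable_P [Nonempty (Fin k)] (hh : ∀ i, Continuous (h i)) (hp : ∀ i, Continuous (p i))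
    (P : X → Measure (ℕ → Fin k)) (hPprob : ∀ x, IsProbabilityMeasure (P x))
    (hPcyl : ∀ x ω n, P x (cyl ω n) = ENNReal.ofReal (pIter h p ω n x)) : Measurable P := by
  have : ∀ x, IsProbabilityMeasure (P x) := hPprob
  refine Measurable.measure_of_isPiSystem_of_isProbabilityMeasure generateFrom_cyls
    isPiSystem_cyls ?_
  rintro _ ⟨ω, n, rfl⟩
  simp_rw [hPcyl]
  have h1 : ∀ n, Continuous (hIter h ω n) := by
    intro n
    induction n with
    | zero => exact continuous_id
    | succ n ih => exact (hh _).comp ih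
  have h2 : Continuous (pIter h p ω n) := by
    induction n with
    | zero => exact continuous_const
    | succ n ih => exact ih.mul ((hp _).comp (h1 n))
  exact h2.measurable.ennreal_ofReal

lemma lintegral_inv (hh : ∀ i, Measurable (h i)) (hp : ∀ i, Measurable (p i))
    (ν : Measure X)
    (hinv : ν = ∑ i, Measure.map (h i) (ν.withDensity fun x => ENNReal.ofReal (p i x)))
    (g : X → ℝ≥0∞) (hg : Measurable g) :
    ∫⁻ x, g x ∂ν = ∫⁻ x, ∑ i, ENNReal.ofReal (p i x) * g (h i x) ∂ν := by
  conv_lhs => rw [hinv]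
  rw [lintegral_finsetSum_measure, lintegral_finsetSum]
  · refine Finset.sum_congr rfl fun i _ => ?_
    rw [lintegral_map hg (hh i)]
    exact lintegral_withDensity_eq_lintegral_mul ν (hp i).ennreal_ofReal (hg.comp (hh i))
  · intro i _
    exact (hp i).ennreal_ofReal.mul (hg.comp (hh i))

lemma ae_comp (hh : ∀ i, Measurable (h i)) (hp : ∀ i, Measurable (p i))
    (hp0 : ∀ i x, 0 < p i x) (ν : Measure X)
    (hinv : ν = ∑ i, Measure.map (h i) (ν.withDensity fun x => ENNReal.ofReal (p i x)))
    (Q : X → Prop) (hQ : ∀ᵐ x ∂ν, Q x) : ∀ᵐ x ∂ν, ∀ i, Q (h i x) := by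
  rw [ae_all_iff]
  intro i
  have hle : Measure.map (h i) (ν.withDensity fun x => ENNReal.ofReal (p i x)) ≤ ν := by
    conv_rhs => rw [hinv]
    exact Finset.single_le_sum (f := fun i => Measure.map (h i)
      (ν.withDensity fun x => ENNReal.ofReal (p i x))) (fun _ _ => Measure.zero_le _)
      (Finset.mem_univ i)
  have h1 := ae_of_ae_map (hh i).aemeasurable
    ((Measure.absolutelyContinuous_of_le hle).ae_le hQ)
  rw [ae_withDensity_iff (hp i).ennreal_ofReal] at h1
  filter_upwards [h1] with x hx
  exact hx (by simpa using hp0 i x)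

lemma harmonic_const (hh : ∀ i, Measurable (h i)) (hp : ∀ i, Measurable (p i))
    (hp0 : ∀ i x, 0 < p i x) (hpsum : ∀ x, ∑ i, p i x = 1) (ν : Measure X)
    [IsProbabilityMeasure ν]
    (hinv : ν = ∑ i, Measure.map (h i) (ν.withDensity fun x => ENNReal.ofReal (p i x)))
    (f : X → ℝ) (hf : Measurable f) (hf0 : ∀ x, 0 ≤ f x) (hf1 : ∀ x, f x ≤ 1)
    (hharm : ∀ x, f x = ∑ i, p i x * f (h i x)) : ∀ᵐ x ∂ν, ∀ i, f (h i x) = f x := by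
  have hV0 : ∀ x, 0 ≤ ∑ i, p i x * (f (h i x) - f x) ^ 2 := fun x =>
    Finset.sum_nonneg fun i _ => mul_nonneg (hp0 i x).le (sq_nonneg _)
  have hVm : Measurable fun x => ∑ i, p i x * (f (h i x) - f x) ^ 2 :=
    Finset.measurable_sum _ fun i _ => (hp i).mul (((hf.comp (hh i)).sub hf).pow_const 2)
  have key := lintegral_inv h p hh hp ν hinv (fun x => ENNReal.ofReal (f x ^ 2))
    (hf.pow_const 2).ennreal_ofReal
  have hpt : ∀ x, ∑ i, ENNReal.ofReal (p i x) * ENNReal.ofReal (f (h i x) ^ 2)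
      = ENNReal.ofReal (∑ i, p i x * (f (h i x) - f x) ^ 2) + ENNReal.ofReal (f x ^ 2) := by
    intro x
    rw [← ENNReal.ofReal_add (hV0 x) (sq_nonneg _)]
    simp_rw [← ENNReal.ofReal_mul (hp0 _ x).le]
    rw [← ENNReal.ofReal_sum_of_nonneg fun i _ => mul_nonneg (hp0 i x).le (sq_nonneg _)]
    congr 1
    have e : ∑ i, p i x * (f (h i x) - f x) ^ 2
        = ∑ i, p i x * f (h i x) ^ 2 - 2 * f x * ∑ i, p i x * f (h i x)
          + f x ^ 2 * ∑ i, p i x := by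
      rw [Finset.mul_sum, Finset.mul_sum, ← Finset.sum_sub_distrib, ← Finset.sum_add_distrib]
      exact Finset.sum_congr rfl fun i _ => by ring
    rw [e, ← hharm, hpsum]; ring
  simp_rw [hpt] at key
  rw [lintegral_add_left hVm.ennreal_ofReal] at key
  have hfin : ∫⁻ x, ENNReal.ofReal (f x ^ 2) ∂ν ≠ ∞ := by
    refine ne_top_of_le_ne_top ENNReal.one_ne_top ?_
    calc ∫⁻ x, ENNReal.ofReal (f x ^ 2) ∂ν ≤ ∫⁻ _, 1 ∂ν := by
          refine lintegral_mono fun x => ?_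
          rw [← ENNReal.ofReal_one]
          exact ENNReal.ofReal_le_ofReal (pow_le_one₀ (hf0 x) (hf1 x))
      _ = 1 := by simp
  have hz : ∫⁻ x, ENNReal.ofReal (∑ i, p i x * (f (h i x) - f x) ^ 2) ∂ν = 0 := by
    have : 0 + ∫⁻ x, ENNReal.ofReal (f x ^ 2) ∂ν
        = ∫⁻ x, ENNReal.ofReal (∑ i, p i x * (f (h i x) - f x) ^ 2) ∂ν
          + ∫⁻ x, ENNReal.ofReal (f x ^ 2) ∂ν := by rw [zero_add]; exact key
    exact ((ENNReal.add_left_inj hfin).1 this).symm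
  rw [lintegral_eq_zero_iff hVm.ennreal_ofReal] at hz
  filter_upwards [hz] with x hx i
  have h1 : ∑ i, p i x * (f (h i x) - f x) ^ 2 = 0 :=
    le_antisymm (by simpa using hx) (hV0 x)
  have h2 := (Finset.sum_eq_zero_iff_of_nonneg
    (fun i _ => mul_nonneg (hp0 i x).le (sq_nonneg _))).1 h1 i (Finset.mem_univ i)
  have h3 := (mul_eq_zero.1 h2).resolve_left (hp0 i x).ne'
  have h4 := pow_eq_zero_iff (two_ne_zero) |>.1 h3
  linarith

lemma onesided_zero_one [Nonempty (Fin k)]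
    (hlip : ∀ i, ∃ L : ℝ≥0, LipschitzWith L (h i))
    (hprange : ∀ i x, p i x ∈ Set.Ioo (0 : ℝ) 1)
    (hpbelow : ∃ δ > (0 : ℝ), ∀ i x, δ ≤ p i x)
    (hpsum : ∀ x, ∑ i, p i x = 1)
    (hdini : ∀ i, ∃ w : ℝ → ℝ, Monotone w ∧
      (∀ x y : X, |p i x - p i y| ≤ w (dist x y)) ∧
      Summable fun n : ℕ => w ((1 / 2 : ℝ) ^ (n + 1)))
    (hcoa : ∃ b > (0 : ℝ), ∀ x y, x ≠ y →
      ∑ j, p j x * Real.log (dist (h j x) (h j y) / dist x y) < -b)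
    (ν : Measure X) [IsProbabilityMeasure ν]
    (hinv : ν = ∑ i, Measure.map (h i)
      (ν.withDensity fun x => ENNReal.ofReal (p i x)))
    (P : X → Measure (ℕ → Fin k)) (hPprob : ∀ x, IsProbabilityMeasure (P x))
    (hPcyl : ∀ x ω n, P x (cyl ω n) = ENNReal.ofReal (pIter h p ω n x))
    (A : Set (ℕ → Fin k)) (hA : MeasurableSet A) (hAi : sh ⁻¹' A = A) :
    (∀ᵐ x ∂ν, P x A = 0) ∨ (∀ᵐ x ∂ν, P x Aᶜ = 0) := by
  have hPp : ∀ x, IsProbabilityMeasure (P x) := hPprob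
  have hhc : ∀ i, Continuous (h i) := fun i => by
    obtain ⟨L, hL⟩ := hlip i; exact hL.continuous
  have hpc : ∀ i, Continuous (p i) := fun i => by
    obtain ⟨w, h1, h2, h3⟩ := hdini i; exact dini_continuous _ w h1 h2 h3
  have hh := fun i => (hhc i).measurable
  have hp := fun i => (hpc i).measurable
  have hp0 : ∀ i x, 0 < p i x := fun i x => (hprange i x).1
  have hp0' : ∀ i x, 0 ≤ p i x := fun i x => (hp0 i x).le
  have hM := P_markov h p hp0' hpsum P hPprob hPcyl
  have hPm := measurable_P h p hhc hpc P hPprob hPcyl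
  obtain ⟨δ, hδ, hpδ⟩ := hpbelow
  obtain ⟨b, hb, hcoa⟩ := hcoa
  set f : X → ℝ := fun x => (P x A).toReal with hf
  have hfm : Measurable f := ((Measure.measurable_coe hA).comp hPm).ennreal_toReal
  have hAc : ∀ i, scons i ⁻¹' A = A := by
    intro i
    conv_lhs => rw [← hAi]
    rfl
  have hharm : ∀ x, f x = ∑ i, p i x * f (h i x) := by
    intro x
    simp only [hf]
    rw [P_markov_apply h p P hM x hA, ENNReal.toReal_sum
      (fun i _ => ENNReal.mul_ne_top ENNReal.ofReal_ne_top (measure_ne_top _ _))]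
    refine Finset.sum_congr rfl fun i _ => ?_
    rw [ENNReal.toReal_mul, ENNReal.toReal_ofReal (hp0' i x), hAc]
  have hf1 : ∀ x, f x ≤ 1 := fun x => by
    have := ENNReal.toReal_mono ENNReal.one_ne_top (prob_le_one (μ := P x) (s := A))
    simpa using this
  have hconst := harmonic_const h p hh hp hp0 hpsum ν hinv f hfm
    (fun x => ENNReal.toReal_nonneg) hf1 hharm
  have hiter : ∀ n, ∀ᵐ x ∂ν, ∀ ω, f (hIter h ω n x) = f x := by
    intro n
    induction n with
    | zero => exact Filter.Eventually.of_forall fun x ω => rfl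
    | succ n ih =>
      filter_upwards [hconst, ae_comp h p hh hp hp0 ν hinv _ ih] with x h1 h2 ω
      rw [hIter_succ', h2, h1]
  have h01 : ∀ᵐ x ∂ν, P x A = 0 ∨ P x Aᶜ = 0 := by
    filter_upwards [ae_all_iff.2 hiter] with x hx
    have hfin : IsFiniteMeasure (P x A • P x) := Measure.smul_finite _ (measure_ne_top _ _)
    have heq : (P x).restrict A = P x A • P x := by
      refine meas_ext_cyl _ _ fun ω n => ?_
      rw [Measure.restrict_apply (measurableSet_cyl _ _), Measure.smul_apply, smul_eq_mul,
        P_cyl_inter h p P hp0' hM hA hAi, hPcyl, mul_comm]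
      congr 1
      exact (ENNReal.toReal_eq_toReal_iff' (measure_ne_top _ _) (measure_ne_top _ _)).1 (hx n ω)
    have h2 : (P x).restrict A Aᶜ = (P x A • P x) Aᶜ := by rw [heq]
    rw [Measure.restrict_apply hA.compl, Set.compl_inter_self, measure_empty, Measure.smul_apply,
      smul_eq_mul] at h2
    exact mul_eq_zero.1 h2.symm
  by_cases hex : ∃ x, P x Aᶜ = 0
  · obtain ⟨x, hx⟩ := hex
    right
    filter_upwards [h01] with y hy
    refine hy.resolve_left fun hy => ?_
    obtain ⟨i⟩ : Nonempty (Fin k) := inferInstance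
    obtain ⟨α, hα, r, hr, hr1, hfr⟩ := frac_moment h p hlip δ hδ
      ((hpδ i x).trans (hprange i x).2.le) hpδ hpsum b hb hcoa
    obtain ⟨C, s, hC, hs0, hs1, hG⟩ := exists_good h p P hPprob hp0' hM α r hα hr hr1 hfr x y
    exact nonsing h p P hPprob δ hδ hpδ hdini hPcyl x y C s hC hs0 hs1 hG A hA hx hy
  · left
    filter_upwards [h01] with y hy
    exact hy.resolve_right fun hy => hex ⟨y, hy⟩

end onesided

/-- Two shift-invariant finite measures with the same one-sided marginal coincide. -/
lemma twosided_unique (μ₁ μ₂ : Measure (ℤ → Fin k)) [IsFiniteMeasure μ₁] [IsFiniteMeasure μ₂]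
    (h1 : Measure.map (fun (ω : ℤ → Fin k) (i : ℤ) => ω (i + 1)) μ₁ = μ₁)
    (h2 : Measure.map (fun (ω : ℤ → Fin k) (i : ℤ) => ω (i + 1)) μ₂ = μ₂)
    (h12 : Measure.map (fun (ω : ℤ → Fin k) (n : ℕ) => ω (n : ℤ)) μ₁
      = Measure.map (fun (ω : ℤ → Fin k) (n : ℕ) => ω (n : ℤ)) μ₂) : μ₁ = μ₂ := by
  have hsm : ∀ N : ℤ, Measurable fun (ω : ℤ → Fin k) (i : ℤ) => ω (i + N) := fun N =>
    measurable_pi_lambda _ fun i => measurable_pi_apply _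
  have hπ : Measurable fun (ω : ℤ → Fin k) (n : ℕ) => ω (n : ℤ) :=
    measurable_pi_lambda _ fun i => measurable_pi_apply _
  have hpow : ∀ m : Measure (ℤ → Fin k),
      Measure.map (fun (ω : ℤ → Fin k) (i : ℤ) => ω (i + 1)) m = m → ∀ N : ℕ,
      Measure.map (fun (ω : ℤ → Fin k) (i : ℤ) => ω (i + (N : ℤ))) m = m := by
    intro m hm N
    induction N with
    | zero => simp
    | succ N ih =>
      conv_rhs => rw [← ih, ← hm]
      rw [Measure.map_map (hsm _) (hsm _)]
      congr 1
      funext ω i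
      simp [add_assoc]
  have hred : ∀ m : Measure (ℤ → Fin k),
      Measure.map (fun (ω : ℤ → Fin k) (i : ℤ) => ω (i + 1)) m = m → ∀ (I : Finset ℤ) (N : ℕ),
      (∀ i ∈ I, 0 ≤ i + (N : ℤ)) → m.map I.restrict
        = (m.map (fun (ω : ℤ → Fin k) (n : ℕ) => ω (n : ℤ))).map
          (fun τ (i : I) => τ (((i : ℤ) + N).toNat)) := by
    intro m hm I N hN
    conv_lhs => rw [← hpow m hm N]
    rw [Measure.map_map (Finset.measurable_restrict I) (hsm _),
      Measure.map_map (measurable_pi_lambda _ fun i => measurable_pi_apply _) hπ]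
    congr 1
    funext ω i
    simp only [Function.comp, Finset.restrict]
    rw [Int.toNat_of_nonneg (hN i i.2)]
  refine IsProjectiveLimit.unique (P := fun I => μ₂.map I.restrict) ?_ (fun I => rfl)
  intro I
  have hN : ∃ N : ℕ, ∀ i ∈ I, 0 ≤ i + (N : ℤ) := by
    refine ⟨I.sup Int.natAbs, fun i hi => ?_⟩
    have := Finset.le_sup (f := Int.natAbs) hi
    omega
  obtain ⟨N, hN⟩ := hN
  change μ₁.map I.restrict = μ₂.map I.restrict
  rw [hred μ₁ h1 I N hN, hred μ₂ h2 I N hN, h12]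

/-- The natural extension of the one-sided system, i.e. the two-sided shift on
`{1,…,k}^ℤ` with the measure whose marginal on nonnegative coordinates is `μ₊`,
is ergodic. -/
theorem natural_extension_ergodic
    (X : Type*) [MetricSpace X] [CompleteSpace X] [TopologicalSpace.SeparableSpace X]
    [MeasurableSpace X] [BorelSpace X] (x₀ : X)
    (hk : 2 ≤ k) (h : Fin k → X → X) (p : Fin k → X → ℝ)
    (hlip : ∀ i, ∃ L : ℝ≥0, LipschitzWith L (h i))
    (hprange : ∀ i x, p i x ∈ Set.Ioo (0 : ℝ) 1)
    (hpbelow : ∃ δ > (0 : ℝ), ∀ i x, δ ≤ p i x)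
    (hpsum : ∀ x, ∑ i, p i x = 1)
    (hdini : ∀ i, ∃ w : ℝ → ℝ, Monotone w ∧
      (∀ x y : X, |p i x - p i y| ≤ w (dist x y)) ∧
      Summable fun n : ℕ => w ((1 / 2 : ℝ) ^ (n + 1)))
    (hcoa : ∃ b > (0 : ℝ), ∀ x y, x ≠ y →
      ∑ j, p j x * Real.log (dist (h j x) (h j y) / dist x y) < -b)
    -- the (unique) invariant probability measure
    (ν : Measure X) [IsProbabilityMeasure ν]
    (hinv : ν = ∑ i, Measure.map (h i)
      (ν.withDensity fun x => ENNReal.ofReal (p i x)))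
    -- the family of measures `p_x` on the one-sided symbol space
    (P : X → Measure (ℕ → Fin k)) (hPprob : ∀ x, IsProbabilityMeasure (P x))
    (hPcyl : ∀ x ω n, P x (cyl ω n) = ENNReal.ofReal (pIter h p ω n x))
    -- the measure `μ₊(E) = ∫ p_x(E) dν(x)`
    (μplus : Measure (ℕ → Fin k))
    (hμplus : ∀ E : Set (ℕ → Fin k), MeasurableSet E → μplus E = ∫⁻ x, P x E ∂ν)
    -- the natural extension: a two-sided shift-invariant probability measure with
    -- marginal `μ₊` on the nonnegative coordinates
    (μ : Measure (ℤ → Fin k)) [IsProbabilityMeasure μ]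
    (hμinv : Measure.map (fun (ω : ℤ → Fin k) (i : ℤ) => ω (i + 1)) μ = μ)
    (hmarginal : Measure.map (fun (ω : ℤ → Fin k) (n : ℕ) => ω (n : ℤ)) μ = μplus) :
    Ergodic (fun (ω : ℤ → Fin k) (i : ℤ) => ω (i + 1)) μ := by
  have hne : Nonempty (Fin k) := ⟨⟨0, by omega⟩⟩
  have hS : Measurable fun (ω : ℤ → Fin k) (i : ℤ) => ω (i + 1) :=
    measurable_pi_lambda _ fun i => measurable_pi_apply _
  have hπ : Measurable fun (ω : ℤ → Fin k) (n : ℕ) => ω (n : ℤ) :=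
    measurable_pi_lambda _ fun i => measurable_pi_apply _
  -- the marginal of an invariant measure is shift invariant
  have hmarg : ∀ m : Measure (ℤ → Fin k),
      Measure.map (fun (ω : ℤ → Fin k) (i : ℤ) => ω (i + 1)) m = m →
      MeasurePreserving sh (m.map (fun (ω : ℤ → Fin k) (n : ℕ) => ω (n : ℤ)))
        (m.map (fun (ω : ℤ → Fin k) (n : ℕ) => ω (n : ℤ))) := by
    intro m hm
    refine ⟨measurable_sh, ?_⟩
    conv_rhs => rw [← hm]
    rw [Measure.map_map measurable_sh hπ, Measure.map_map hπ hS]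
    rfl
  have hpmarg : IsProbabilityMeasure μplus := by
    rw [← hmarginal]; exact Measure.isProbabilityMeasure_map hπ.aemeasurable
  have hplus : Ergodic sh μplus := by
    refine ⟨by rw [← hmarginal]; exact hmarg μ hμinv, ⟨fun A hA hAi => ?_⟩⟩
    rw [eventuallyConst_set']
    rcases onesided_zero_one h p hlip hprange hpbelow hpsum hdini hcoa ν hinv P hPprob hPcyl
      A hA hAi with h0 | h1
    · left
      rw [ae_eq_empty, hμplus A hA, lintegral_congr_ae h0, lintegral_zero]
    · right
      rw [ae_eq_univ, hμplus _ hA.compl, lintegral_congr_ae h1, lintegral_zero]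
  refine ⟨⟨hS, hμinv⟩, ⟨fun A hA hAi => ?_⟩⟩
  have hrinv : Measure.map (fun (ω : ℤ → Fin k) (i : ℤ) => ω (i + 1)) (μ.restrict A)
      = μ.restrict A := by
    have := (MeasurePreserving.restrict_preimage (⟨hS, hμinv⟩ :
      MeasurePreserving (fun (ω : ℤ → Fin k) (i : ℤ) => ω (i + 1)) μ μ) hA).map_eq
    rwa [hAi] at this
  obtain ⟨c, hc⟩ := hplus.eq_smul_of_absolutelyContinuous (hmarg _ hrinv) (by
    rw [← hmarginal]
    exact Measure.AbsolutelyContinuous.map Measure.restrict_le_self.absolutelyContinuous hπ)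
  have hcA : c = μ A := by
    have := congrArg (fun m : Measure (ℕ → Fin k) => m Set.univ) hc
    simpa [Measure.map_apply hπ MeasurableSet.univ] using this.symm
  have hcfin : c ≠ ∞ := by rw [hcA]; exact measure_ne_top _ _
  have hfin : IsFiniteMeasure (c • μ) := Measure.smul_finite _ hcfin
  have heq : μ.restrict A = c • μ := by
    refine twosided_unique _ _ hrinv ?_ ?_
    · rw [Measure.map_smul, hμinv]
    · rw [hc, Measure.map_smul, hmarginal]
  have h2 : μ.restrict A Aᶜ = (c • μ) Aᶜ := by rw [heq]
  rw [Measure.restrict_apply hA.compl, Set.compl_inter_self, measure_empty, Measure.smul_apply,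
    smul_eq_mul, hcA] at h2
  rw [eventuallyConst_set']
  rcases mul_eq_zero.1 h2.symm with h0 | h0
  · left; rwa [ae_eq_empty]
  · right; rwa [ae_eq_univ]
end
end

section
/- Let (h_i, p_i) be a contracting-on-average iterated function system on ℝ^d as above with invariant measure ν, μ₋ the σ-invariant measure on Σ determined by μ₋(C_{ω^n}) = μ₊(C_{ω^{−n}}) where μ₊(E) = ∫ p_x(E) dν(x), and π the coding map π(ω) = lim_n h_{ω^{−n}}(x₀) (defined μ₋-a.e.). Let z₁,…,z_k ∈ L¹(ℝ^d, ν) with z := ∫ ∑_j p_j(x) z_j(x) dν(x) < 0. Then for every ε > 0 and μ₋-almost every ω ∈ Σ there exists K > 0 such that for all n ≥ 1: K^{-1}·exp(n(1+ε)z) ≤ exp(z_{ω^{−n}}(π(σ^n ω))) ≤ K·exp(n(1−ε)z). -/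
open MeasureTheory Metric Filter ENNReal NNReal

noncomputable section

variable {k : ℕ}

/-- `hIterRev h ω n = h_{ω^{-n}} = h_{ω 0} ∘ h_{ω 1} ∘ ⋯ ∘ h_{ω (n-1)}`. -/
def hIterRev {X : Type*} (h : Fin k → X → X) (ω : ℕ → Fin k) : ℕ → X → X
  | 0 => id
  | n + 1 => fun x => hIterRev h ω n (h (ω n) x)

/-- `zIterRev h z ω n x = z_{ω^{-n}}(x)`, the ergodic sum along the reversed word
`ω_n ω_{n-1} … ω_1`. -/
def zIterRev {X : Type*} (h : Fin k → X → X) (z : Fin k → X → ℝ)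
    (ω : ℕ → Fin k) : ℕ → X → ℝ
  | 0 => fun _ => 0
  | n + 1 => fun x => z (ω n) x + zIterRev h z ω n (h (ω n) x)

/-- The cylinder `C_{ω^{-n}}` of sequences beginning with the reversed word
`ω_n ω_{n-1} … ω_1`. -/
def cylRev (ω : ℕ → Fin k) (n : ℕ) : Set (ℕ → Fin k) :=
  {τ | ∀ i < n, τ i = ω (n - 1 - i)}


section helper

set_option linter.unusedSectionVars false

/-- prepend a symbol -/
def consS (j : Fin k) (ω : ℕ → Fin k) : ℕ → Fin k
  | 0 => j
  | n + 1 => ω n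

/-- shift -/
def shS (ω : ℕ → Fin k) : ℕ → Fin k := fun i => ω (i + 1)

/-- replace the first `n` symbols -/
def extS {n : ℕ} (v : Fin n → Fin k) (ω : ℕ → Fin k) : ℕ → Fin k :=
  fun i => if hi : i < n then v ⟨i, hi⟩ else ω (i - n)

lemma shS_consS (j : Fin k) (ω : ℕ → Fin k) : shS (consS j ω) = ω := rfl

lemma consS_shS (ω : ℕ → Fin k) : consS (ω 0) (shS ω) = ω := by
  funext i; cases i <;> rfl

lemma extS_cons {n : ℕ} (j : Fin k) (v : Fin n → Fin k) (ω : ℕ → Fin k) :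
    extS (Fin.cons j v : Fin (n + 1) → Fin k) ω = consS j (extS v ω) := by
  funext i
  cases i with
  | zero => simp [extS, consS]
  | succ i =>
    simp only [extS, consS, Nat.add_lt_add_iff_right, Nat.reduceSubDiff]
    split_ifs with hi
    · exact Fin.cons_succ (α := fun _ => Fin k) j v ⟨i, hi⟩
    · rfl

lemma extS_zero (v : Fin 0 → Fin k) (ω : ℕ → Fin k) : extS v ω = ω := by
  funext i; simp [extS]

lemma continuous_shS : Continuous (shS : (ℕ → Fin k) → ℕ → Fin k) := by
  unfold shS; fun_prop

lemma continuous_consS (j : Fin k) : Continuous (consS j) := by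
  refine continuous_pi fun i => ?_
  cases i with
  | zero => exact continuous_const
  | succ i => exact continuous_apply i

variable {X : Type*} [MetricSpace X]

/-- bundle of the quantitative hypotheses -/
structure Hyp (h : Fin k → X → X) (p : Fin k → X → ℝ) (s ρ C δ : ℝ) : Prop where
  hcont : ∀ j, Continuous (h j)
  pcont : ∀ j, Continuous (p j)
  spos : 0 < s
  sle : s ≤ 1
  ρ0 : 0 ≤ ρ
  ρ1 : ρ < 1
  C0 : 0 ≤ C
  δ0 : 0 < δ
  pδ : ∀ j x, δ ≤ p j x
  psum : ∀ x, ∑ j, p j x = 1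
  phold : ∀ j x y, |p j x - p j y| ≤ C * dist x y ^ s
  contr : ∀ x y, ∑ j, p j x * dist (h j x) (h j y) ^ s ≤ ρ * dist x y ^ s

/-- the two-point transfer operator -/
def Lop (h : Fin k → X → X) (p : Fin k → X → ℝ) (G : (ℕ → Fin k) → X → X → ℝ) :
    (ℕ → Fin k) → X → X → ℝ :=
  fun ω x y => ∑ j, p j x * G (consS j ω) (h j x) (h j y)

/-- weight of the reversed word -/
def pR (h : Fin k → X → X) (p : Fin k → X → ℝ) : ℕ → (ℕ → Fin k) → X → ℝ
  | 0, _, _ => 1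
  | n + 1, ω, x => pR h p n (shS ω) x * p (ω 0) (hIterRev h (shS ω) n x)

variable {h : Fin k → X → X} {p : Fin k → X → ℝ} {s ρ C δ : ℝ}

lemma hIterRev_succ (ω : ℕ → Fin k) (n : ℕ) (x : X) :
    hIterRev h ω (n + 1) x = h (ω 0) (hIterRev h (shS ω) n x) := by
  induction n generalizing x with
  | zero => rfl
  | succ n ih =>
    exact ih (h (ω (n + 1)) x)

lemma Lop_iterate (G : (ℕ → Fin k) → X → X → ℝ) (n : ℕ) (ω : ℕ → Fin k) (x y : X) :
    (Lop h p)^[n] G ω x y = ∑ v : Fin n → Fin k, pR h p n (extS v ω) x *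
      G (extS v ω) (hIterRev h (extS v ω) n x) (hIterRev h (extS v ω) n y) := by
  induction n generalizing G with
  | zero => simp [pR, extS_zero, hIterRev]
  | succ n ih =>
    rw [Function.iterate_succ_apply, ih, ← (Fin.consEquiv fun _ : Fin (n+1) => Fin k).sum_comp,
      Fintype.sum_prod_type, Finset.sum_comm]
    refine Finset.sum_congr rfl fun v _ => ?_
    rw [Lop, Finset.mul_sum]
    refine Finset.sum_congr rfl fun j _ => ?_
    have : (Fin.consEquiv fun _ : Fin (n+1) => Fin k) (j, v) = (Fin.cons j v : Fin (n+1) → Fin k) := rfl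
    rw [this, extS_cons, hIterRev_succ, hIterRev_succ, pR, shS_consS]
    simp only [consS]
    ring

lemma Hyp.ppos (H : Hyp h p s ρ C δ) (j x) : 0 < p j x := H.δ0.trans_le (H.pδ j x)

lemma Hyp.ple (H : Hyp h p s ρ C δ) (j x) : p j x ≤ 1 := by
  rw [← H.psum x]
  exact Finset.single_le_sum (f := fun j => p j x) (fun i _ => (H.ppos i x).le) (Finset.mem_univ j)

lemma Hyp.Lop_mono (H : Hyp h p s ρ C δ) {F G : (ℕ → Fin k) → X → X → ℝ}
    (hFG : ∀ ω x y, F ω x y ≤ G ω x y) (n : ℕ) :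
    ∀ ω x y, (Lop h p)^[n] F ω x y ≤ (Lop h p)^[n] G ω x y := by
  induction n generalizing F G with
  | zero => exact hFG
  | succ n ih =>
    simp only [Function.iterate_succ_apply]
    refine ih fun ω x y => Finset.sum_le_sum fun j _ => ?_
    exact mul_le_mul_of_nonneg_left (hFG _ _ _) (H.ppos j x).le

lemma Hyp.Lop_const (H : Hyp h p s ρ C δ) (c : ℝ) (n : ℕ) :
    (Lop h p)^[n] (fun _ _ _ => c) = fun _ _ _ => c := by
  induction n with
  | zero => rfl
  | succ n ih =>
    rw [Function.iterate_succ_apply]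
    convert ih using 2
    funext ω x y
    simp [Lop, ← Finset.sum_mul, H.psum]

lemma Hyp.Lop_dist (H : Hyp h p s ρ C δ) {B : ℝ} (hB : 0 ≤ B) (n : ℕ) (ω : ℕ → Fin k) (x y : X) :
    (Lop h p)^[n] (fun _ x y => B * dist x y ^ s) ω x y ≤ B * ρ ^ n * dist x y ^ s := by
  induction n generalizing ω x y with
  | zero => simp
  | succ n ih =>
    rw [Function.iterate_succ_apply']
    calc _ ≤ ∑ j, p j x * (B * ρ ^ n * dist (h j x) (h j y) ^ s) :=
          Finset.sum_le_sum fun j _ => mul_le_mul_of_nonneg_left (ih _ _ _) (H.ppos j x).le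
      _ = B * ρ ^ n * ∑ j, p j x * dist (h j x) (h j y) ^ s := by
          rw [Finset.mul_sum]; exact Finset.sum_congr rfl fun j _ => by ring
      _ ≤ B * ρ ^ n * (ρ * dist x y ^ s) :=
          mul_le_mul_of_nonneg_left (H.contr x y) (mul_nonneg hB (pow_nonneg H.ρ0 n))
      _ = _ := by ring

lemma Lop_sub (F G : (ℕ → Fin k) → X → X → ℝ) (n : ℕ) :
    (Lop h p)^[n] (fun ω x y => F ω x y - G ω x y) =
      fun ω x y => (Lop h p)^[n] F ω x y - (Lop h p)^[n] G ω x y := by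
  funext ω x y
  simp only [Lop_iterate, ← Finset.sum_sub_distrib, mul_sub]

lemma Hyp.Lop_cont (H : Hyp h p s ρ C δ) {G : (ℕ → Fin k) → X → X → ℝ}
    (hG : Continuous fun q : (ℕ → Fin k) × X × X => G q.1 q.2.1 q.2.2) (n : ℕ) :
    Continuous fun q : (ℕ → Fin k) × X × X => (Lop h p)^[n] G q.1 q.2.1 q.2.2 := by
  induction n generalizing G with
  | zero => exact hG
  | succ n ih =>
    rw [Function.iterate_succ_apply]
    refine ih ?_
    unfold Lop
    refine continuous_finsetSum _ fun j _ => ?_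
    refine ((H.pcont j).comp (by fun_prop)).mul ?_
    exact hG.comp (f := fun q : (ℕ → Fin k) × X × X => (consS j q.1, h j q.2.1, h j q.2.2))
      (((continuous_consS j).comp (by fun_prop)).prodMk
        (((H.hcont j).comp (by fun_prop)).prodMk ((H.hcont j).comp (by fun_prop))))

/-- nice functions on `Σ × X` -/
structure Nice (B s : ℝ) (G : (ℕ → Fin k) → X → ℝ) : Prop where
  cont : Continuous fun q : (ℕ → Fin k) × X => G q.1 q.2
  bdd : ∀ ω x, |G ω x| ≤ B
  hold : ∀ ω x y, |G ω x - G ω y| ≤ B * dist x y ^ s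

lemma Hyp.Lop_abs (H : Hyp h p s ρ C δ) {F G : (ℕ → Fin k) → X → X → ℝ}
    (hFG : ∀ ω x y, |F ω x y| ≤ G ω x y) (n : ℕ) (ω : ℕ → Fin k) (x y : X) :
    |(Lop h p)^[n] F ω x y| ≤ (Lop h p)^[n] G ω x y := by
  rw [abs_le]
  refine ⟨?_, H.Lop_mono (fun ω x y => (abs_le.1 (hFG ω x y)).2) n ω x y⟩
  have h1 := H.Lop_mono (F := fun ω x y => 0 - G ω x y) (G := F)
    (fun ω x y => by linarith [(abs_le.1 (hFG ω x y)).1]) n ω x y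
  rw [Lop_sub] at h1
  have h2 := congrFun (congrFun (congrFun (H.Lop_const 0 n) ω) x) y
  linarith

/-- the one-step operator preserves nice functions -/
lemma Hyp.nice_step (H : Hyp h p s ρ C δ) {B : ℝ} {D : ℝ}
    {G : (ℕ → Fin k) → X → ℝ}
    (hc : Continuous fun q : (ℕ → Fin k) × X => G q.1 q.2)
    (hb : ∀ ω x, |G ω x| ≤ B) (hD : k * C * B + ρ * D ≤ D) (hD0 : 0 ≤ D)
    (hh : ∀ ω x y, |G ω x - G ω y| ≤ D * dist x y ^ s) :
    (Continuous fun q : (ℕ → Fin k) × X => ∑ j, p j q.2 * G (consS j q.1) (h j q.2)) ∧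
    (∀ ω x, |∑ j, p j x * G (consS j ω) (h j x)| ≤ B) ∧
    (∀ ω x y, |∑ j, p j x * G (consS j ω) (h j x) - ∑ j, p j y * G (consS j ω) (h j y)|
      ≤ D * dist x y ^ s) := by
  refine ⟨?_, ?_, ?_⟩
  · refine continuous_finsetSum _ fun j _ => ?_
    refine ((H.pcont j).comp (by fun_prop)).mul ?_
    exact hc.comp (f := fun q : (ℕ → Fin k) × X => (consS j q.1, h j q.2))
      (((continuous_consS j).comp (by fun_prop)).prodMk ((H.hcont j).comp (by fun_prop)))
  · intro ω x
    calc _ ≤ ∑ j, |p j x * G (consS j ω) (h j x)| := Finset.abs_sum_le_sum_abs _ _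
      _ ≤ ∑ j, p j x * B := Finset.sum_le_sum fun j _ => by
          rw [abs_mul, abs_of_pos (H.ppos j x)]
          exact mul_le_mul_of_nonneg_left (hb _ _) (H.ppos j x).le
      _ = B := by rw [← Finset.sum_mul, H.psum, one_mul]
  · intro ω x y
    have hd : 0 ≤ dist x y ^ s := Real.rpow_nonneg dist_nonneg _
    rw [← Finset.sum_sub_distrib]
    calc _ ≤ ∑ j, |p j x * G (consS j ω) (h j x) - p j y * G (consS j ω) (h j y)| :=
          Finset.abs_sum_le_sum_abs _ _
      _ ≤ ∑ j, (p j x * (D * dist (h j x) (h j y) ^ s) + (C * dist x y ^ s) * B) := by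
          refine Finset.sum_le_sum fun j _ => ?_
          have e : p j x * G (consS j ω) (h j x) - p j y * G (consS j ω) (h j y)
            = p j x * (G (consS j ω) (h j x) - G (consS j ω) (h j y))
              + (p j x - p j y) * G (consS j ω) (h j y) := by ring
          rw [e]
          refine (abs_add_le _ _).trans (add_le_add ?_ ?_)
          · rw [abs_mul, abs_of_pos (H.ppos j x)]
            exact mul_le_mul_of_nonneg_left (hh _ _ _) (H.ppos j x).le
          · rw [abs_mul]
            exact mul_le_mul (H.phold _ _ _) (hb _ _) (abs_nonneg _) (mul_nonneg H.C0 hd)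
      _ = D * ∑ j, p j x * dist (h j x) (h j y) ^ s + k * C * B * dist x y ^ s := by
          rw [Finset.sum_add_distrib, Finset.mul_sum]
          simp only [Finset.sum_const, Finset.card_univ, Fintype.card_fin, nsmul_eq_mul]
          congr 1
          · exact Finset.sum_congr rfl fun j _ => by ring
          · ring
      _ ≤ D * (ρ * dist x y ^ s) + k * C * B * dist x y ^ s := by
          gcongr; exact H.contr x y
      _ = (k * C * B + ρ * D) * dist x y ^ s := by ring
      _ ≤ _ := mul_le_mul_of_nonneg_right hD hd

lemma hIterRev_congr {ω τ : ℕ → Fin k} {n : ℕ} (hωτ : ∀ i < n, ω i = τ i) (x : X) :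
    hIterRev h ω n x = hIterRev h τ n x := by
  induction n generalizing x with
  | zero => rfl
  | succ n ih =>
    simp only [hIterRev]
    rw [hωτ n (by omega)]
    exact ih (fun i hi => hωτ i (by omega)) _

lemma Hyp.hIterRev_cont (H : Hyp h p s ρ C δ) (ω : ℕ → Fin k) (n : ℕ) :
    Continuous (hIterRev h ω n) := by
  induction n with
  | zero => exact continuous_id
  | succ n ih => exact ih.comp (H.hcont _)

lemma Hyp.pR_cont (H : Hyp h p s ρ C δ) (ω : ℕ → Fin k) (n : ℕ) :
    Continuous (pR h p n ω) := by
  induction n generalizing ω with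
  | zero => exact continuous_const
  | succ n ih => exact (ih _).mul ((H.pcont _).comp (H.hIterRev_cont _ _))

lemma Hyp.pR_mem (H : Hyp h p s ρ C δ) (ω : ℕ → Fin k) (n : ℕ) (x : X) :
    0 ≤ pR h p n ω x ∧ pR h p n ω x ≤ 1 := by
  induction n generalizing ω with
  | zero => simp [pR]
  | succ n ih =>
    simp only [pR]
    exact ⟨mul_nonneg (ih _).1 (H.ppos _ _).le,
      mul_le_one₀ (ih _).2 (H.ppos _ _).le (H.ple _ _)⟩

lemma Hyp.pR_le (H : Hyp h p s ρ C δ) (ω : ℕ → Fin k) (n : ℕ) (x : X) :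
    δ ^ n ≤ pR h p n ω x := by
  induction n generalizing ω with
  | zero => simp [pR]
  | succ n ih =>
    simp only [pR, pow_succ]
    exact mul_le_mul (ih _) (H.pδ _ _) H.δ0.le (H.pR_mem _ _ _).1

lemma extS_prefix {n : ℕ} (v : Fin n → Fin k) (ω : ℕ → Fin k) (i : ℕ) (hi : i < n) :
    extS v ω i = v ⟨i, hi⟩ := by simp [extS, hi]

lemma measurable_hIterRev_seq (n : ℕ) (x : X) [MeasurableSpace X] :
    Measurable fun ω : ℕ → Fin k => hIterRev h ω n x := by
  have : (fun ω : ℕ → Fin k => hIterRev h ω n x) =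
      (fun v : Fin n → Fin k => if hk : 0 < k then hIterRev h (extS v (fun _ => ⟨0, hk⟩)) n x else x) ∘
        (fun ω (i : Fin n) => ω i) := by
    funext ω
    have hk : 0 < k := (ω 0).pos
    simp only [Function.comp, hk, dite_true]
    exact hIterRev_congr (fun i hi => by simp [extS, hi]) x
  rw [this]
  exact (measurable_of_finite _).comp (by fun_prop)

section meas

variable [MeasurableSpace X] [BorelSpace X] [SecondCountableTopology X]
variable {ν : Measure X} [IsProbabilityMeasure ν] {μm : Measure (ℕ → Fin k)}
  [IsProbabilityMeasure μm]

lemma Hyp.integral_Lop (H : Hyp h p s ρ C δ)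
    (hcyl : ∀ ω n, μm.real (cyl ω n) = ∫ x, pR h p n ω x ∂ν)
    (G : (ℕ → Fin k) → X → ℝ) (n : ℕ) (ω₀ : ℕ → Fin k) (x₀ : X) :
    ∫ x, (Lop h p)^[n] (fun ω _ y => G ω y) ω₀ x x₀ ∂ν =
      ∫ ω, G (extS (fun i : Fin n => ω i) ω₀) (hIterRev h ω n x₀) ∂μm := by
  simp only [Lop_iterate]
  rw [integral_finsetSum]
  swap
  · intro v _
    refine Integrable.mul_const ?_ _
    refine Integrable.of_bound (C := 1) (H.pR_cont _ _).aestronglyMeasurable ?_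
    refine ae_of_all _ fun x => ?_
    rw [Real.norm_eq_abs, abs_of_nonneg (H.pR_mem _ _ _).1]
    exact (H.pR_mem _ _ _).2
  have hr : Measurable fun (ω : ℕ → Fin k) (i : Fin n) => ω i := by fun_prop
  have e : ∀ ω : ℕ → Fin k, G (extS (fun i : Fin n => ω i) ω₀) (hIterRev h ω n x₀) =
      (fun v : Fin n → Fin k => G (extS v ω₀) (hIterRev h (extS v ω₀) n x₀))
        ((fun (ω : ℕ → Fin k) (i : Fin n) => ω i) ω) := by
    intro ω
    simp only
    rw [hIterRev_congr (ω := ω) (τ := extS (fun i : Fin n => ω i) ω₀)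
      (fun i hi => by simp [extS, hi]) x₀]
  simp only [e]
  rw [← integral_map (μ := μm) (φ := fun (ω : ℕ → Fin k) (i : Fin n) => ω i)
    (f := fun v : Fin n → Fin k => G (extS v ω₀) (hIterRev h (extS v ω₀) n x₀))
    hr.aemeasurable (measurable_of_finite _).aestronglyMeasurable]
  have := Measure.isProbabilityMeasure_map (μ := μm) hr.aemeasurable
  rw [integral_fintype (Integrable.of_finite)]
  refine Finset.sum_congr rfl fun v _ => ?_
  rw [integral_mul_const, ← hcyl, map_measureReal_apply hr (measurableSet_singleton v), smul_eq_mul]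
  congr 2
  ext ω
  simp only [cyl, Set.mem_ofPred_eq, Set.mem_preimage, Set.mem_singleton_iff, funext_iff]
  constructor
  · intro hh i; rw [hh i i.2, extS_prefix]
  · intro hh i hi; rw [extS_prefix _ _ _ hi]; exact hh ⟨i, hi⟩

lemma tendsto_extS (ω ω₀ : ℕ → Fin k) :
    Tendsto (fun n => extS (fun i : Fin n => ω i) ω₀) atTop (nhds ω) := by
  rw [tendsto_pi_nhds]
  intro i
  refine tendsto_const_nhds.congr' ?_
  filter_upwards [eventually_gt_atTop i] with n hn
  simp [extS, hn]

lemma measurable_extS (n : ℕ) (ω₀ : ℕ → Fin k) :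
    Measurable (fun ω : ℕ → Fin k => extS (fun i : Fin n => ω i) ω₀) := by
  refine measurable_pi_lambda _ fun i => ?_
  by_cases hi : i < n
  · simp only [extS, hi, dite_true]; fun_prop
  · simp only [extS, hi, dite_false]; fun_prop

/-- weak convergence -/
lemma Hyp.tendsto_Lop (H : Hyp h p s ρ C δ)
    (hcyl : ∀ ω n, μm.real (cyl ω n) = ∫ x, pR h p n ω x ∂ν)
    {π : (ℕ → Fin k) → X} {x₀ : X}
    (hπ : ∀ᵐ ω ∂μm, Tendsto (fun n => hIterRev h ω n x₀) atTop (nhds (π ω)))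
    (ω₀ : ℕ → Fin k) {B : ℝ} {G : (ℕ → Fin k) → X → ℝ} (hB : 0 ≤ B) (hG : Nice B s G) :
    Tendsto (fun n => ∫ x, (Lop h p)^[n] (fun ω x _ => G ω x) ω₀ x x₀ ∂ν) atTop
      (nhds (∫ ω, G ω (π ω) ∂μm)) := by
  have h1 : Tendsto (fun n : ℕ => ∫ ω, G (extS (fun i : Fin n => ω i) ω₀) (hIterRev h ω n x₀) ∂μm)
      atTop (nhds (∫ ω, G ω (π ω) ∂μm)) := by
    refine tendsto_integral_of_dominated_convergence (fun _ => B) ?_ (integrable_const _) ?_ ?_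
    · intro n
      exact (hG.cont.measurable.comp
        ((measurable_extS n ω₀).prodMk (measurable_hIterRev_seq n x₀))).aestronglyMeasurable
    · exact fun n => ae_of_all _ fun ω => hG.bdd _ _
    · filter_upwards [hπ] with ω hω
      exact (hG.cont.tendsto (ω, π ω)).comp ((tendsto_extS ω ω₀).prodMk_nhds hω)
  have c1 := fun n => H.Lop_cont (G := fun ω x _ => G ω x)
    (hG.cont.comp (f := fun q : (ℕ → Fin k) × X × X => (q.1, q.2.1)) (by fun_prop)) n
  have c2 := fun n => H.Lop_cont (G := fun ω _ y => G ω y)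
    (hG.cont.comp (f := fun q : (ℕ → Fin k) × X × X => (q.1, q.2.2)) (by fun_prop)) n
  have m1 : ∀ n, Continuous fun x => (Lop h p)^[n] (fun ω x _ => G ω x) ω₀ x x₀ := fun n =>
    (c1 n).comp (f := fun x : X => (ω₀, x, x₀)) (by fun_prop)
  have m2 : ∀ n, Continuous fun x => (Lop h p)^[n] (fun ω _ y => G ω y) ω₀ x x₀ := fun n =>
    (c2 n).comp (f := fun x : X => (ω₀, x, x₀)) (by fun_prop)
  have b1 : ∀ n x, |(Lop h p)^[n] (fun ω x _ => G ω x) ω₀ x x₀| ≤ B := fun n x => by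
    have := H.Lop_abs (F := fun ω x _ => G ω x) (G := fun _ _ _ => B) (fun ω x y => hG.bdd ω x) n ω₀ x x₀
    rwa [H.Lop_const] at this
  have b2 : ∀ n x, |(Lop h p)^[n] (fun ω _ y => G ω y) ω₀ x x₀| ≤ B := fun n x => by
    have := H.Lop_abs (F := fun ω _ y => G ω y) (G := fun _ _ _ => B) (fun ω x y => hG.bdd ω y) n ω₀ x x₀
    rwa [H.Lop_const] at this
  have i1 : ∀ n, Integrable (fun x => (Lop h p)^[n] (fun ω x _ => G ω x) ω₀ x x₀) ν := fun n =>
    Integrable.of_bound (C := B) (m1 n).aestronglyMeasurable (ae_of_all _ fun x => b1 n x)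
  have i2 : ∀ n, Integrable (fun x => (Lop h p)^[n] (fun ω _ y => G ω y) ω₀ x x₀) ν := fun n =>
    Integrable.of_bound (C := B) (m2 n).aestronglyMeasurable (ae_of_all _ fun x => b2 n x)
  have h2 : Tendsto (fun n => ∫ x, ((Lop h p)^[n] (fun ω x _ => G ω x) ω₀ x x₀ -
      (Lop h p)^[n] (fun ω _ y => G ω y) ω₀ x x₀) ∂ν) atTop (nhds (∫ _, (0:ℝ) ∂ν)) := by
    refine tendsto_integral_of_dominated_convergence (fun _ => B + B)
      (fun n => ((m1 n).sub (m2 n)).aestronglyMeasurable) (integrable_const _) ?_ ?_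
    · exact fun n => ae_of_all _ fun x => (abs_sub _ _).trans (add_le_add (b1 n x) (b2 n x))
    · refine ae_of_all _ fun x => ?_
      have hlim : Tendsto (fun n : ℕ => B * ρ ^ n * dist x x₀ ^ s) atTop (nhds 0) := by
        have := ((tendsto_pow_atTop_nhds_zero_of_lt_one H.ρ0 H.ρ1).const_mul B).mul_const
          (dist x x₀ ^ s)
        simpa using this
      refine squeeze_zero_norm (fun n => ?_) hlim
      have e := congrFun (congrFun (congrFun (Lop_sub (h := h) (p := p)
        (fun ω x _ => G ω x) (fun ω _ y => G ω y) n) ω₀) x) x₀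
      rw [← e, Real.norm_eq_abs]
      exact (H.Lop_abs (G := fun _ x y => B * dist x y ^ s) (fun ω x y => hG.hold ω x y) n ω₀ x x₀).trans
        (H.Lop_dist hB n ω₀ x x₀)
  have h3 := h2.add h1
  simp only [integral_zero, zero_add] at h3
  refine h3.congr fun n => ?_
  rw [← H.integral_Lop hcyl, integral_sub (i1 n) (i2 n)]
  ring

/-- stationarity of `μm` under the prepending Markov chain -/
def Stat (p : Fin k → X → ℝ) (π : (ℕ → Fin k) → X) (μm : Measure (ℕ → Fin k)) : Prop :=
  μm = ∑ j, Measure.map (consS j) (μm.withDensity fun ω => ENNReal.ofReal (p j (π ω)))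

lemma Hyp.fin_wd (H : Hyp h p s ρ C δ) (π : (ℕ → Fin k) → X) (j : Fin k) :
    IsFiniteMeasure (μm.withDensity fun ω => ENNReal.ofReal (p j (π ω))) := by
  refine isFiniteMeasure_withDensity ?_
  refine ne_of_lt (lt_of_le_of_lt (lintegral_mono (g := fun _ => 1) fun ω => ?_) (by simp))
  exact ENNReal.ofReal_le_one.2 (H.ple _ _)

/-- integration against the right side of the stationarity equation -/
lemma Hyp.integral_rhs (H : Hyp h p s ρ C δ) {π : (ℕ → Fin k) → X} (hπm : Measurable π)
    {F : (ℕ → Fin k) → ℝ} (hF : Measurable F)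
    (hi : ∀ j, Integrable (fun ω => F (consS j ω)) μm) :
    Integrable F (∑ j, Measure.map (consS j) (μm.withDensity fun ω => ENNReal.ofReal (p j (π ω))))
    ∧ ∫ ω, F ω ∂(∑ j, Measure.map (consS j)
        (μm.withDensity fun ω => ENNReal.ofReal (p j (π ω)))) =
      ∑ j, ∫ ω, p j (π ω) * F (consS j ω) ∂μm := by
  have hpm : ∀ j, Measurable fun ω => ENNReal.ofReal (p j (π ω)) := fun j =>
    ((H.pcont j).measurable.comp hπm).ennreal_ofReal
  have hcm : ∀ j : Fin k, Measurable (consS j) := fun j => (continuous_consS j).measurable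
  have key : ∀ j, Integrable F
      (Measure.map (consS j) (μm.withDensity fun ω => ENNReal.ofReal (p j (π ω)))) := by
    intro j
    rw [integrable_map_measure hF.aestronglyMeasurable (hcm j).aemeasurable]
    refine (hi j).mono_measure ?_
    calc _ ≤ μm.withDensity 1 := withDensity_mono (ae_of_all _ fun ω =>
            ENNReal.ofReal_le_one.2 (H.ple _ _))
      _ = μm := withDensity_one
  refine ⟨integrable_finsetSum_measure.2 fun j _ => key j, ?_⟩
  rw [integral_finsetSum_measure fun j _ => key j]
  refine Finset.sum_congr rfl fun j _ => ?_
  rw [integral_map (hcm j).aemeasurable hF.aestronglyMeasurable,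
    integral_withDensity_eq_integral_toReal_smul (hpm j) (ae_of_all _ fun _ => ENNReal.ofReal_lt_top)]
  refine integral_congr_ae (ae_of_all _ fun ω => ?_)
  simp only [smul_eq_mul]
  rw [ENNReal.toReal_ofReal (H.ppos _ _).le]

lemma Hyp.stat (H : Hyp h p s ρ C δ)
    (hcyl : ∀ ω n, μm.real (cyl ω n) = ∫ x, pR h p n ω x ∂ν)
    {π : (ℕ → Fin k) → X} (hπm : Measurable π) {x₀ : X}
    (hπ : ∀ᵐ ω ∂μm, Tendsto (fun n => hIterRev h ω n x₀) atTop (nhds (π ω)))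
    (ω₀ : ℕ → Fin k) : Stat p π μm := by
  unfold Stat
  have := fun j => H.fin_wd (μm := μm) π j
  refine ext_of_forall_integral_eq_of_IsFiniteMeasure fun f => ?_
  have hk0 : (0 : ℝ) ≤ k := Nat.cast_nonneg k
  set B : ℝ := ‖f‖ with hBdef
  have hB : 0 ≤ B := norm_nonneg _
  have hb : ∀ ω, |f ω| ≤ B := fun ω => f.norm_coe_le_norm ω
  have hr1 : 0 < 1 - ρ := by linarith [H.ρ1]
  set D : ℝ := max B (k * C * B / (1 - ρ)) with hDdef
  have hBD : B ≤ D := le_max_left _ _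
  have hD0 : 0 ≤ D := hB.trans hBD
  have hD : k * C * B + ρ * D ≤ D := by
    have : k * C * B / (1 - ρ) ≤ D := le_max_right _ _
    rw [div_le_iff₀ hr1] at this
    linarith
  have hz : ∀ (ω : ℕ → Fin k) (x y : X), |f ω - f ω| ≤ D * dist x y ^ s := fun ω x y => by
    simp only [sub_self, abs_zero]; exact mul_nonneg hD0 (Real.rpow_nonneg dist_nonneg _)
  obtain ⟨n1, n2, n3⟩ := H.nice_step (G := fun ω _ => f ω) (B := B) (D := D)
    (f.continuous.comp continuous_fst) (fun ω _ => hb ω) hD hD0 hz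
  have t1 := H.tendsto_Lop hcyl hπ ω₀ (G := fun ω _ => f ω) hD0
    ⟨f.continuous.comp continuous_fst, fun ω _ => (hb ω).trans hBD, hz⟩
  have t2 := H.tendsto_Lop hcyl hπ ω₀ (G := fun ω x => ∑ j, p j x * f (consS j ω)) hD0
    ⟨n1, fun ω x => (n2 ω x).trans hBD, n3⟩
  have t1' := (tendsto_add_atTop_iff_nat 1).2 t1
  have heq := tendsto_nhds_unique t1' t2
  rw [heq]
  have hIntg : ∀ j, Integrable (fun ω => f (consS j ω)) μm := fun j =>
    Integrable.of_bound (C := B) (f.continuous.comp (continuous_consS j)).aestronglyMeasurable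
      (ae_of_all _ fun ω => hb _)
  rw [(H.integral_rhs hπm f.continuous.measurable hIntg).2, integral_finsetSum]
  intro j _
  refine Integrable.of_bound (C := B) ?_ (ae_of_all _ fun ω => ?_)
  · exact (((H.pcont j).measurable.comp hπm).mul
      (f.continuous.comp (continuous_consS j)).measurable).aestronglyMeasurable
  · rw [Real.norm_eq_abs, abs_mul, abs_of_pos (H.ppos _ _)]
    calc _ ≤ 1 * B := mul_le_mul (H.ple _ _) (hb _) (abs_nonneg _) zero_le_one
      _ = B := one_mul B

lemma Hyp.law (H : Hyp h p s ρ C δ)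
    (hcyl : ∀ ω n, μm.real (cyl ω n) = ∫ x, pR h p n ω x ∂ν)
    (hinv : ν = ∑ i, Measure.map (h i) (ν.withDensity fun x => ENNReal.ofReal (p i x)))
    {π : (ℕ → Fin k) → X} (hπm : Measurable π) {x₀ : X}
    (hπ : ∀ᵐ ω ∂μm, Tendsto (fun n => hIterRev h ω n x₀) atTop (nhds (π ω)))
    (ω₀ : ℕ → Fin k) : Measure.map π μm = ν := by
  have hpr := Measure.isProbabilityMeasure_map (μ := μm) hπm.aemeasurable
  have inv1 : ∀ g : X → ℝ, Continuous g → (∃ B, ∀ x, |g x| ≤ B) →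
      ∫ x, ∑ j, p j x * g (h j x) ∂ν = ∫ x, g x ∂ν := by
    rintro g hg ⟨B, hB⟩
    have hB0 : 0 ≤ B := (abs_nonneg _).trans (hB x₀)
    have key : ∀ j, Integrable g (Measure.map (h j) (ν.withDensity fun x => ENNReal.ofReal (p j x))) := by
      intro j
      rw [integrable_map_measure hg.aestronglyMeasurable (H.hcont j).measurable.aemeasurable]
      refine Integrable.mono_measure (ν := ν) (Integrable.of_bound (C := B)
        (hg.comp (H.hcont j)).aestronglyMeasurable (ae_of_all _ fun ω => hB _)) ?_
      calc _ ≤ ν.withDensity 1 := withDensity_mono (ae_of_all _ fun ω =>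
            ENNReal.ofReal_le_one.2 (H.ple _ _))
        _ = ν := withDensity_one
    conv_rhs => rw [hinv]
    rw [integral_finsetSum_measure fun j _ => key j, integral_finsetSum]
    · refine Finset.sum_congr rfl fun j _ => ?_
      rw [integral_map (H.hcont j).measurable.aemeasurable hg.aestronglyMeasurable,
        integral_withDensity_eq_integral_toReal_smul (H.pcont j).measurable.ennreal_ofReal
          (ae_of_all _ fun _ => ENNReal.ofReal_lt_top)]
      refine integral_congr_ae (ae_of_all _ fun ω => ?_)
      simp only [smul_eq_mul]
      rw [ENNReal.toReal_ofReal (H.ppos _ _).le]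
    · intro j _
      refine Integrable.of_bound (C := B) ?_ (ae_of_all _ fun ω => ?_)
      · exact ((H.pcont j).mul (hg.comp (H.hcont j))).aestronglyMeasurable
      · rw [Real.norm_eq_abs, abs_mul, abs_of_pos (H.ppos _ _)]
        calc _ ≤ 1 * B := mul_le_mul (H.ple _ _) (hB _) (abs_nonneg _) zero_le_one
          _ = B := one_mul B
  have inv2 : ∀ n : ℕ, ∀ g : X → ℝ, Continuous g → (∃ B, ∀ x, |g x| ≤ B) →
      ∫ x, (Lop h p)^[n] (fun _ x _ => g x) ω₀ x x₀ ∂ν = ∫ x, g x ∂ν := by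
    intro n
    induction n with
    | zero => intro g _ _; rfl
    | succ n ih =>
      rintro g hg ⟨B, hB⟩
      rw [← inv1 g hg ⟨B, hB⟩, ← ih (fun x => ∑ j, p j x * g (h j x))]
      · rfl
      · exact continuous_finsetSum _ fun j _ => (H.pcont j).mul (hg.comp (H.hcont j))
      · refine ⟨B, fun x => ?_⟩
        calc _ ≤ ∑ j, |p j x * g (h j x)| := Finset.abs_sum_le_sum_abs _ _
          _ ≤ ∑ j, p j x * B := Finset.sum_le_sum fun j _ => by
              rw [abs_mul, abs_of_pos (H.ppos j x)]
              exact mul_le_mul_of_nonneg_left (hB _) (H.ppos j x).le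
          _ = B := by rw [← Finset.sum_mul, H.psum, one_mul]
  let μ1 : ProbabilityMeasure X := ⟨Measure.map π μm, hpr⟩
  let μ2 : ProbabilityMeasure X := ⟨ν, inferInstance⟩
  have ht : Tendsto (fun _ : ℕ => μ1) atTop (nhds μ2) := by
    rw [tendsto_iff_forall_lipschitz_integral_tendsto]
    rintro g ⟨B, hB⟩ ⟨K, hK⟩
    have hgb : ∀ x y, |g x - g y| ≤ B := fun x y => by
      have := hB x y; rwa [Real.dist_eq] at this
    have hB0 : 0 ≤ B := (abs_nonneg _).trans (hgb x₀ x₀)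
    set D : ℝ := |g x₀| + B + K
    have hg : Nice D s (fun (_ : ℕ → Fin k) x => g x) := by
      refine ⟨hK.continuous.comp continuous_snd, fun ω x => ?_, fun ω x y => ?_⟩
      · have := abs_sub_abs_le_abs_sub (g x) (g x₀)
        have := hgb x x₀
        have : (0:ℝ) ≤ K := K.2
        simp only [D]; linarith
      · rcases le_total (dist x y) 1 with hd | hd
        · have h1 : dist x y ≤ dist x y ^ s := by
            calc dist x y = dist x y ^ (1:ℝ) := (Real.rpow_one _).symm
              _ ≤ dist x y ^ s :=
                Real.rpow_le_rpow_of_exponent_ge_of_imp dist_nonneg hd H.sle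
                  (fun _ h0 => absurd h0 one_ne_zero)
          have h2 := hK.dist_le_mul x y
          rw [Real.dist_eq] at h2
          refine h2.trans ?_
          exact mul_le_mul (by simp only [D]; linarith [abs_nonneg (g x₀)]) h1 dist_nonneg
            (by simp only [D]; positivity)
        · have h1 : 1 ≤ dist x y ^ s := Real.one_le_rpow hd H.spos.le
          calc _ ≤ B := hgb x y
            _ ≤ D * 1 := by
              have : (0:ℝ) ≤ K := K.2
              simp only [D]; linarith [abs_nonneg (g x₀)]
            _ ≤ _ := mul_le_mul_of_nonneg_left h1 (by simp only [D]; positivity)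
    have t1 := H.tendsto_Lop hcyl hπ ω₀ (B := D) (by simp only [D]; positivity) hg
    have e : ∀ n : ℕ, ∫ x, (Lop h p)^[n] (fun _ x _ => g x) ω₀ x x₀ ∂ν = ∫ x, g x ∂ν := fun n =>
      inv2 n g hK.continuous ⟨D, fun x => hg.bdd ω₀ x⟩
    simp only [e] at t1
    have e2 := tendsto_nhds_unique t1 tendsto_const_nhds
    have e3 : ∫ x, g x ∂(Measure.map π μm) = ∫ ω, g (π ω) ∂μm :=
      integral_map hπm.aemeasurable hK.continuous.aestronglyMeasurable
    change Tendsto (fun _ => ∫ x, g x ∂(Measure.map π μm)) atTop (nhds (∫ x, g x ∂ν))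
    rw [e3, e2]
    exact tendsto_const_nhds
  have := tendsto_nhds_unique ht tendsto_const_nhds
  exact (congrArg (fun q : ProbabilityMeasure X => (q : Measure X)) this).symm

lemma Hyp.stat_ge (H : Hyp h p s ρ C δ) {π : (ℕ → Fin k) → X} (hS : Stat p π μm)
    (j : Fin k) {A : Set (ℕ → Fin k)} (hA : MeasurableSet A) :
    ENNReal.ofReal δ * μm (consS j ⁻¹' A) ≤ μm A := by
  have hm := (continuous_consS j).measurable hA
  conv_rhs => rw [hS]
  rw [Measure.finsetSum_apply]
  refine le_trans ?_ (Finset.single_le_sum (f := fun j => Measure.map (consS j) (μm.withDensity fun ω => ENNReal.ofReal (p j (π ω))) A)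
    (fun i _ => zero_le) (Finset.mem_univ j))
  rw [Measure.map_apply (continuous_consS j).measurable hA, withDensity_apply _ hm]
  calc _ = ∫⁻ _ in consS j ⁻¹' A, ENNReal.ofReal δ ∂μm := by simp
    _ ≤ _ := lintegral_mono fun ω => ENNReal.ofReal_le_ofReal (H.pδ _ _)

lemma Hyp.ae_cons (H : Hyp h p s ρ C δ) {π : (ℕ → Fin k) → X} (hS : Stat p π μm)
    {Q : (ℕ → Fin k) → Prop} (hQ : ∀ᵐ ω ∂μm, Q ω) (j : Fin k) : ∀ᵐ ω ∂μm, Q (consS j ω) := by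
  obtain ⟨A, hAs, hAm, hA0⟩ := exists_measurable_superset_of_null hQ
  have := H.stat_ge hS j hAm
  rw [hA0, nonpos_iff_eq_zero, mul_eq_zero] at this
  rcases this with h0 | h0
  · exact absurd h0 (by simp [H.δ0])
  · exact measure_mono_null (fun ω hω => @hAs (consS j ω) hω) h0

lemma Hyp.pi_shift (H : Hyp h p s ρ C δ) {π : (ℕ → Fin k) → X} {x₀ : X}
    (hmp : MeasurePreserving shS μm μm)
    (hπ : ∀ᵐ ω ∂μm, Tendsto (fun n => hIterRev h ω n x₀) atTop (nhds (π ω))) :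
    ∀ᵐ ω ∂μm, π ω = h (ω 0) (π (shS ω)) := by
  filter_upwards [hπ, hmp.quasiMeasurePreserving.ae hπ] with ω h1 h2
  have h3 := (tendsto_add_atTop_iff_nat 1).2 h1
  simp only [hIterRev_succ] at h3
  exact tendsto_nhds_unique h3 (((H.hcont _).tendsto _).comp h2)

lemma Hyp.pi_cons (H : Hyp h p s ρ C δ) {π : (ℕ → Fin k) → X} (hS : Stat p π μm)
    (hsh : ∀ᵐ ω ∂μm, π ω = h (ω 0) (π (shS ω))) (j : Fin k) :
    ∀ᵐ ω ∂μm, π (consS j ω) = h j (π ω) := H.ae_cons hS hsh j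

/-- the indicator of `E` as a real function -/
def indE (E : Set (ℕ → Fin k)) : (ℕ → Fin k) → ℝ := E.indicator fun _ => 1

lemma indE_mem (E : Set (ℕ → Fin k)) (ω : ℕ → Fin k) : 0 ≤ indE E ω ∧ indE E ω ≤ 1 := by
  by_cases hω : ω ∈ E <;> simp [indE, hω]

lemma Hyp.descend (H : Hyp h p s ρ C δ) {π : (ℕ → Fin k) → X} (hπm : Measurable π)
    (hS : Stat p π μm)
    (hsh : ∀ᵐ ω ∂μm, π ω = h (ω 0) (π (shS ω)))
    {E : Set (ℕ → Fin k)} (hE : MeasurableSet E) (hinvE : shS ⁻¹' E = E)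
    {D : ℝ} (hD0 : 0 ≤ D) (hD : k * C * 1 + ρ * D ≤ D) (ω₀ : ℕ → Fin k) (n : ℕ) :
    ∀ G : (ℕ → Fin k) → X → ℝ, (Continuous fun q : (ℕ → Fin k) × X => G q.1 q.2) →
      (∀ ω x, |G ω x| ≤ 1) → (∀ ω x y, |G ω x - G ω y| ≤ D * dist x y ^ s) →
      (∀ ω τ : ℕ → Fin k, (∀ i < n, ω i = τ i) → G ω = G τ) →
      ∃ u : X → ℝ, Continuous u ∧ (∀ x, |u x| ≤ 1) ∧ (∀ x y, |u x - u y| ≤ D * dist x y ^ s) ∧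
        ∫ ω, |u (π ω) - indE E ω| ∂μm ≤ ∫ ω, |G ω (π ω) - indE E ω| ∂μm := by
  have hEi : Measurable (indE E) := measurable_const.indicator hE
  induction n with
  | zero =>
    intro G hc hb hh hdep
    refine ⟨G ω₀, hc.comp (f := fun x : X => (ω₀, x)) (by fun_prop), hb ω₀, hh ω₀, ?_⟩
    refine le_of_eq (integral_congr_ae (ae_of_all _ fun ω => ?_))
    simp only [hdep ω ω₀ (by simp)]
  | succ n ih =>
    intro G hc hb hh hdep
    obtain ⟨c', b', h'⟩ := H.nice_step hc hb hD hD0 hh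
    obtain ⟨u, hu1, hub, hu2, hu3⟩ := ih (fun ω x => ∑ j, p j x * G (consS j ω) (h j x)) c' b' h' (by
      intro ω τ hωτ
      funext x
      refine Finset.sum_congr rfl fun j _ => ?_
      rw [hdep (consS j ω) (consS j τ)]
      intro i hi
      cases i with
      | zero => rfl
      | succ i => exact hωτ i (by omega))
    refine ⟨u, hu1, hub, hu2, hu3.trans ?_⟩
    set F : (ℕ → Fin k) → ℝ := fun ω => |G ω (π ω) - indE E ω| with hF
    have hFm : Measurable F :=
      ((hc.measurable.comp (measurable_id.prodMk hπm)).sub hEi).abs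
    have hFb : ∀ ω, |F ω| ≤ 2 := fun ω => by
      simp only [hF, abs_abs]
      refine (abs_sub _ _).trans ?_
      have := indE_mem E ω
      have := hb ω (π ω)
      rw [abs_of_nonneg (indE_mem E ω).1]; linarith
    have hFi : ∀ j, Integrable (fun ω => F (consS j ω)) μm := fun j =>
      Integrable.of_bound (C := 2) (hFm.comp (continuous_consS j).measurable).aestronglyMeasurable
        (ae_of_all _ fun ω => hFb _)
    have hpF : ∀ j, Integrable (fun ω => p j (π ω) * F (consS j ω)) μm := fun j => by
      refine Integrable.of_bound (C := 2) (((H.pcont j).measurable.comp hπm).mul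
        (hFm.comp (continuous_consS j).measurable)).aestronglyMeasurable (ae_of_all _ fun ω => ?_)
      rw [Real.norm_eq_abs, abs_mul, abs_of_pos (H.ppos _ _)]
      calc _ ≤ 1 * 2 := mul_le_mul (H.ple _ _) (hFb _) (abs_nonneg _) zero_le_one
        _ = (2:ℝ) := by norm_num
    have e : ∫ ω, F ω ∂μm = ∑ j, ∫ ω, p j (π ω) * F (consS j ω) ∂μm := by
      rw [← (H.integral_rhs hπm hFm hFi).2]
      congr 1
    rw [e, ← integral_finsetSum _ fun j _ => hpF j]
    refine integral_mono_of_nonneg (ae_of_all _ fun ω => abs_nonneg _)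
      (integrable_finsetSum _ fun j _ => hpF j) ?_
    filter_upwards [ae_all_iff.2 fun j => H.pi_cons hS hsh j] with ω hω
    have e2 : ∀ j, indE E (consS j ω) = indE E ω := by
      intro j
      have : consS j ω ∈ E ↔ ω ∈ E := by
        conv_lhs => rw [← hinvE]
        rfl
      by_cases hh : ω ∈ E
      · simp [indE, hh, this.2 hh]
      · simp [indE, hh, mt this.1 hh]
    simp only [hF, hω, e2]
    calc |∑ j, p j (π ω) * G (consS j ω) (h j (π ω)) - indE E ω|
        = |∑ j, p j (π ω) * (G (consS j ω) (h j (π ω)) - indE E ω)| := by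
          simp only [mul_sub, Finset.sum_sub_distrib, ← Finset.sum_mul, H.psum, one_mul]
      _ ≤ ∑ j, |p j (π ω) * (G (consS j ω) (h j (π ω)) - indE E ω)| := Finset.abs_sum_le_sum_abs _ _
      _ = _ := Finset.sum_congr rfl fun j _ => by rw [abs_mul, abs_of_pos (H.ppos _ _)]

lemma Hyp.approx (H : Hyp h p s ρ C δ) {π : (ℕ → Fin k) → X} (hπm : Measurable π)
    (hS : Stat p π μm)
    (hsh : ∀ᵐ ω ∂μm, π ω = h (ω 0) (π (shS ω)))
    {E : Set (ℕ → Fin k)} (hE : MeasurableSet E) (hinvE : shS ⁻¹' E = E)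
    {D : ℝ} (hD0 : 0 ≤ D) (hD : k * C * 1 + ρ * D ≤ D) (ω₀ : ℕ → Fin k) {ε : ℝ} (hε : 0 < ε) :
    ∃ u : X → ℝ, Continuous u ∧ (∀ x, |u x| ≤ 1) ∧ (∀ x y, |u x - u y| ≤ D * dist x y ^ s) ∧
        ∫ ω, |u (π ω) - indE E ω| ∂μm < ε := by
  have hEi : Measurable (indE E) := measurable_const.indicator hE
  have hIntg : Integrable (indE E) μm := Integrable.of_bound (C := 1) hEi.aestronglyMeasurable
    (ae_of_all _ fun ω => by
      rw [Real.norm_eq_abs, abs_of_nonneg (indE_mem E ω).1]; exact (indE_mem E ω).2)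
  obtain ⟨f, hf, hfi⟩ := hIntg.exists_boundedContinuous_integral_sub_le (half_pos hε)
  set g : (ℕ → Fin k) → ℝ := fun ω => max 0 (min (f ω) 1) with hg
  have hgc : Continuous g := by have := f.continuous; fun_prop
  have hg0 : ∀ ω, 0 ≤ g ω := fun ω => le_max_left _ _
  have hg1 : ∀ ω, g ω ≤ 1 := fun ω => max_le zero_le_one (min_le_right _ _)
  have hgf : ∫ ω, |g ω - indE E ω| ∂μm ≤ ε / 2 := by
    refine le_trans (integral_mono_of_nonneg (ae_of_all _ fun ω => abs_nonneg _)
      (hIntg.sub hfi).norm (ae_of_all _ fun ω => ?_)) hf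
    simp only [hg, Pi.sub_apply, Real.norm_eq_abs]
    obtain ⟨h0, h1⟩ := indE_mem E ω
    rcases le_total (f ω) 0 with a | a <;> rcases le_total (f ω) 1 with b | b
    · rw [min_eq_left b, max_eq_left a, abs_le]
      constructor <;> [have := le_abs_self (indE E ω - f ω); have := le_abs_self (indE E ω - f ω)] <;> linarith
    · linarith
    · rw [min_eq_left b, max_eq_right a, abs_sub_comm]
    · rw [min_eq_right b, max_eq_right zero_le_one, abs_le]
      constructor <;> [have := neg_le_abs (indE E ω - f ω); have := neg_le_abs (indE E ω - f ω)] <;> linarith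
  have ht : Tendsto (fun n : ℕ => ∫ ω, |g (extS (fun i : Fin n => ω i) ω₀) - indE E ω| ∂μm) atTop
      (nhds (∫ ω, |g ω - indE E ω| ∂μm)) := by
    refine tendsto_integral_of_dominated_convergence (fun _ => 1) ?_ (integrable_const _) ?_ ?_
    · exact fun n => ((hgc.measurable.comp (measurable_extS n ω₀)).sub hEi).abs.aestronglyMeasurable
    · refine fun n => ae_of_all _ fun ω => ?_
      rw [Real.norm_eq_abs, abs_abs, abs_le]
      have := indE_mem E ω
      have := hg0 (extS (fun i : Fin n => ω i) ω₀)
      have := hg1 (extS (fun i : Fin n => ω i) ω₀)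
      constructor <;> linarith
    · refine ae_of_all _ fun ω => ?_
      exact (((hgc.tendsto ω).comp (tendsto_extS ω ω₀)).sub_const _).abs
  obtain ⟨n, hn⟩ := (ht.eventually (gt_mem_nhds (show _ < ε by linarith))).exists
  have hec : Continuous fun ω : ℕ → Fin k => extS (fun i : Fin n => ω i) ω₀ := by
    refine continuous_pi fun i => ?_
    by_cases hi : i < n
    · simp only [extS, hi, dite_true]; fun_prop
    · simp only [extS, hi, dite_false]; fun_prop
  obtain ⟨u, u1, u2, u3, u4⟩ := H.descend hπm hS hsh hE hinvE hD0 hD ω₀ n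
    (fun ω _ => g (extS (fun i : Fin n => ω i) ω₀))
    ((hgc.comp hec).comp continuous_fst)
    (fun ω x => abs_le.2 ⟨by linarith [hg0 (extS (fun i : Fin n => ω i) ω₀)], hg1 _⟩)
    (fun ω x y => by
      simp only [sub_self, abs_zero]; exact mul_nonneg hD0 (Real.rpow_nonneg dist_nonneg _))
    (fun ω τ hωτ => by
      have : (fun i : Fin n => ω i) = fun i : Fin n => τ i := funext fun i => hωτ i i.2
      simp only [this])
  exact ⟨u, u1, u2, u3, u4.trans_lt hn⟩

lemma exists_pos_point {π : (ℕ → Fin k) → X} (hπm : Measurable π) {E : Set (ℕ → Fin k)}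
    (h0 : μm E ≠ 0) :
    ∃ x, ∀ η > (0:ℝ), 0 < μm (E ∩ π ⁻¹' ball x η) := by
  have : (Measure.map π (μm.restrict E)) Set.univ ≠ 0 := by
    rw [Measure.map_apply hπm MeasurableSet.univ]; simpa using h0
  obtain ⟨x, -, hx⟩ := exists_mem_forall_mem_nhdsWithin_pos_measure this
  refine ⟨x, fun η hη => ?_⟩
  have h1 := hx (ball x η) (by rw [nhdsWithin_univ]; exact ball_mem_nhds x hη)
  rwa [Measure.map_apply hπm measurableSet_ball,
    Measure.restrict_apply (hπm measurableSet_ball), Set.inter_comm] at h1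

lemma Hyp.pos_step (H : Hyp h p s ρ C δ) {π : (ℕ → Fin k) → X} (hπm : Measurable π)
    (hS : Stat p π μm)
    (hsh : ∀ᵐ ω ∂μm, π ω = h (ω 0) (π (shS ω)))
    {E : Set (ℕ → Fin k)} (hE : MeasurableSet E) (hinvE : shS ⁻¹' E = E) {x : X}
    (hx : ∀ η > (0:ℝ), 0 < μm (E ∩ π ⁻¹' ball x η)) (j : Fin k) :
    ∀ η > (0:ℝ), 0 < μm (E ∩ π ⁻¹' ball (h j x) η) := by
  intro η hη
  obtain ⟨η', hη', hsub⟩ := Metric.continuous_iff.1 (H.hcont j) x η hη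
  refine lt_of_lt_of_le ?_ (H.stat_ge hS j (hE.inter (hπm measurableSet_ball)))
  refine ENNReal.mul_pos (by simp [H.δ0]) (ne_of_gt ?_)
  refine (hx η' hη').trans_le (measure_mono_ae ?_)
  filter_upwards [H.pi_cons hS hsh j] with ω hω
  rintro ⟨h1, h2⟩
  refine ⟨?_, ?_⟩
  · rw [← hinvE]; exact h1
  · change π (consS j ω) ∈ ball (h j x) η
    rw [hω]
    exact hsub _ h2

lemma Hyp.exists_contr (H : Hyp h p s ρ C δ) (x y : X) :
    ∃ j, dist (h j x) (h j y) ^ s ≤ ρ * dist x y ^ s := by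
  by_contra! hcon
  have h1 := H.contr x y
  have hne : (Finset.univ : Finset (Fin k)).Nonempty := by
    by_contra hne
    rw [Finset.not_nonempty_iff_eq_empty] at hne
    have := H.psum x
    rw [hne] at this
    simp at this
  have h2 : ∑ j, p j x * (ρ * dist x y ^ s) < ∑ j, p j x * dist (h j x) (h j y) ^ s :=
    Finset.sum_lt_sum_of_nonempty hne fun j _ => mul_lt_mul_of_pos_left (hcon j) (H.ppos j x)
  rw [← Finset.sum_mul, H.psum, one_mul] at h2
  linarith

lemma Hyp.zero_one (H : Hyp h p s ρ C δ) {π : (ℕ → Fin k) → X} (hπm : Measurable π)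
    (hS : Stat p π μm)
    (hsh : ∀ᵐ ω ∂μm, π ω = h (ω 0) (π (shS ω))) (ω₀ : ℕ → Fin k)
    {E : Set (ℕ → Fin k)} (hE : MeasurableSet E) (hinvE : shS ⁻¹' E = E) :
    μm E = 0 ∨ μm Eᶜ = 0 := by
  by_contra! hcon
  obtain ⟨hE0, hE1⟩ := hcon
  have hinvE' : shS ⁻¹' Eᶜ = Eᶜ := by rw [Set.preimage_compl, hinvE]
  obtain ⟨x, hx⟩ := exists_pos_point hπm hE0
  obtain ⟨y, hy⟩ := exists_pos_point hπm hE1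
  have hr1 : 0 < 1 - ρ := by linarith [H.ρ1]
  set D : ℝ := k * C / (1 - ρ) with hDdef
  have hD0 : 0 ≤ D := div_nonneg (mul_nonneg (Nat.cast_nonneg k) H.C0) hr1.le
  have hD : k * C * 1 + ρ * D ≤ D := by
    have : D * (1 - ρ) = k * C := div_mul_cancel₀ _ hr1.ne'
    linarith
  -- a scale
  obtain ⟨η, hη, hηD⟩ : ∃ η > (0:ℝ), D * (3 * η) ^ s < 1 / 3 := by
    have hc : Tendsto (fun η : ℝ => D * (3 * η) ^ s) (nhds 0) (nhds (D * (3 * 0) ^ s)) := by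
      have : Continuous fun η : ℝ => D * (3 * η) ^ s :=
        continuous_const.mul ((continuous_const.mul continuous_id).rpow_const fun _ => Or.inr H.spos.le)
      exact this.tendsto 0
    rw [mul_zero, Real.zero_rpow H.spos.ne', mul_zero] at hc
    have h1 := (hc.eventually (gt_mem_nhds (show (0:ℝ) < 1 / 3 by norm_num))).filter_mono
      (nhdsWithin_le_nhds (s := Set.Ioi 0))
    obtain ⟨η, h2, h3⟩ := (h1.and self_mem_nhdsWithin).exists
    exact ⟨η, h3, h2⟩
  have hiter : ∀ n : ℕ, ∃ x' y', (∀ η > (0:ℝ), 0 < μm (E ∩ π ⁻¹' ball x' η)) ∧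
      (∀ η > (0:ℝ), 0 < μm (Eᶜ ∩ π ⁻¹' ball y' η)) ∧ dist x' y' ^ s ≤ ρ ^ n * dist x y ^ s := by
    intro n
    induction n with
    | zero => exact ⟨x, y, hx, hy, by simp⟩
    | succ n ih =>
      obtain ⟨x', y', h1, h2, h3⟩ := ih
      obtain ⟨j, hj⟩ := H.exists_contr x' y'
      refine ⟨h j x', h j y', H.pos_step hπm hS hsh hE hinvE h1 j,
        H.pos_step hπm hS hsh hE.compl hinvE' h2 j, hj.trans ?_⟩
      rw [pow_succ, mul_comm (ρ ^ n), mul_assoc]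
      exact mul_le_mul_of_nonneg_left h3 H.ρ0
  have hlim : Tendsto (fun n : ℕ => ρ ^ n * dist x y ^ s) atTop (nhds 0) := by
    simpa using (tendsto_pow_atTop_nhds_zero_of_lt_one H.ρ0 H.ρ1).mul_const (dist x y ^ s)
  obtain ⟨n, hn⟩ := (hlim.eventually (gt_mem_nhds (Real.rpow_pos_of_pos hη s))).exists
  obtain ⟨x', y', hx', hy', hxy⟩ := hiter n
  have hd : dist x' y' < η := (Real.rpow_lt_rpow_iff dist_nonneg hη.le H.spos).1 (hxy.trans_lt hn)
  have ha := ENNReal.toReal_pos (hx' η hη).ne' (measure_ne_top _ _)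
  have hb := ENNReal.toReal_pos (hy' η hη).ne' (measure_ne_top _ _)
  obtain ⟨u, u1, u2, u3, u4⟩ := H.approx hπm hS hsh hE hinvE hD0 hD ω₀
    (ε := min (μm (E ∩ π ⁻¹' ball x' η)).toReal (μm (Eᶜ ∩ π ⁻¹' ball y' η)).toReal / 3)
    (by have := lt_min ha hb; linarith)
  have hEi : Measurable (indE E) := measurable_const.indicator hE
  have hIntg : Integrable (fun ω => |u (π ω) - indE E ω|) μm := by
    refine Integrable.of_bound (C := 2) ((u1.measurable.comp hπm).sub hEi).abs.aestronglyMeasurable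
      (ae_of_all _ fun ω => ?_)
    rw [Real.norm_eq_abs, abs_abs]
    refine (abs_sub _ _).trans ?_
    have := indE_mem E ω
    have := u2 (π ω)
    rw [abs_of_nonneg (indE_mem E ω).1]; linarith
  have hlow : ∀ A : Set (ℕ → Fin k), MeasurableSet A →
      (∀ ω ∈ A, 1 / 3 ≤ |u (π ω) - indE E ω|) →
      (μm A).toReal / 3 ≤ ∫ ω, |u (π ω) - indE E ω| ∂μm := by
    intro A hA hle
    calc (μm A).toReal / 3 = ∫ ω in A, (1 / 3 : ℝ) ∂μm := by
          rw [setIntegral_const, smul_eq_mul, Measure.real]; ring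
      _ ≤ ∫ ω in A, |u (π ω) - indE E ω| ∂μm :=
          setIntegral_mono_on (integrable_const _) hIntg.integrableOn hA hle
      _ ≤ _ := setIntegral_le_integral hIntg (ae_of_all _ fun ω => abs_nonneg _)
  obtain ⟨ω, hω, hωu⟩ : ∃ ω ∈ E ∩ π ⁻¹' ball x' η, |u (π ω) - indE E ω| < 1 / 3 := by
    by_contra! hc
    have := hlow _ (hE.inter (hπm measurableSet_ball)) hc
    have := min_le_left (μm (E ∩ π ⁻¹' ball x' η)).toReal (μm (Eᶜ ∩ π ⁻¹' ball y' η)).toReal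
    linarith
  obtain ⟨τ, hτ, hτu⟩ : ∃ ω ∈ Eᶜ ∩ π ⁻¹' ball y' η, |u (π ω) - indE E ω| < 1 / 3 := by
    by_contra! hc
    have := hlow _ (hE.compl.inter (hπm measurableSet_ball)) hc
    have := min_le_right (μm (E ∩ π ⁻¹' ball x' η)).toReal (μm (Eᶜ ∩ π ⁻¹' ball y' η)).toReal
    linarith
  have e1 : indE E ω = 1 := by simp [indE, hω.1]
  have e2 : indE E τ = 0 := by exact Set.indicator_of_notMem hτ.1 _
  rw [e1, abs_lt] at hωu
  rw [e2, abs_lt] at hτu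
  have hdd : dist (π ω) (π τ) ≤ 3 * η := by
    have h1 : dist (π ω) x' < η := hω.2
    have h2 : dist (π τ) y' < η := hτ.2
    have h3 := dist_triangle4 (π ω) x' y' (π τ)
    rw [dist_comm y'] at h3
    linarith
  have h4 := u3 (π ω) (π τ)
  have h5 : D * dist (π ω) (π τ) ^ s ≤ D * (3 * η) ^ s :=
    mul_le_mul_of_nonneg_left (Real.rpow_le_rpow dist_nonneg hdd H.spos.le) hD0
  have h6 := le_abs_self (u (π ω) - u (π τ))
  linarith [hωu.1, hτu.2]

end meas

end helper

section maximal

variable {Ω : Type*} [MeasurableSpace Ω] {μ : Measure Ω} [IsProbabilityMeasure μ]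

/-- running maxima of Birkhoff sums -/
def maxB (T : Ω → Ω) (f : Ω → ℝ) : ℕ → Ω → ℝ
  | 0 => f
  | n + 1 => fun ω => f ω + max 0 (maxB T f n (T ω))

set_option linter.unusedSectionVars false in
lemma maxB_mono (T : Ω → Ω) (f : Ω → ℝ) : ∀ ω, Monotone fun n => maxB T f n ω := by
  have key : ∀ n ω, maxB T f n ω ≤ maxB T f (n + 1) ω := by
    intro n
    induction n with
    | zero => intro ω; simp [maxB]
    | succ n ih =>
      intro ω
      have := ih (T ω)
      change f ω + max 0 (maxB T f n (T ω)) ≤ f ω + max 0 (maxB T f (n + 1) (T ω))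
      gcongr
  exact fun ω => monotone_nat_of_le_succ fun n => key n ω

set_option linter.unusedSectionVars false in
lemma le_maxB (T : Ω → Ω) (f : Ω → ℝ) (n : ℕ) : ∀ ω, birkhoffSum T f (n + 1) ω ≤ maxB T f n ω := by
  induction n with
  | zero => intro ω; simp [maxB, birkhoffSum]
  | succ n ih =>
    intro ω
    rw [birkhoffSum_succ']
    change _ ≤ f ω + max 0 (maxB T f n (T ω))
    have := ih (T ω)
    have := le_max_right 0 (maxB T f n (T ω))
    linarith

lemma birkhoff_bdd {T : Ω → Ω} (hT : MeasurePreserving T μ μ)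
    (h01 : ∀ E : Set Ω, MeasurableSet E → T ⁻¹' E = E → μ E = 0 ∨ μ Eᶜ = 0)
    {f : Ω → ℝ} (hfm : Measurable f) (hf : Integrable f μ) (hneg : ∫ ω, f ω ∂μ < 0) :
    ∀ᵐ ω ∂μ, ∃ M : ℝ, ∀ n : ℕ, birkhoffSum T f (n + 1) ω ≤ M := by
  have hm : ∀ n, Measurable (maxB T f n) := by
    intro n
    induction n with
    | zero => exact hfm
    | succ n ih => exact hfm.add (measurable_const.max (ih.comp hT.measurable))
  have hi : ∀ n, Integrable (maxB T f n) μ := by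
    intro n
    induction n with
    | zero => exact hf
    | succ n ih =>
      exact hf.add ((integrable_zero _ _ _).sup (hT.integrable_comp_of_integrable ih))
  set A : Set Ω := {ω | ∀ M : ℕ, ∃ n, (M : ℝ) < maxB T f n ω} with hA
  have hAm : MeasurableSet A := by
    have : A = ⋂ M : ℕ, ⋃ n, {ω | (M : ℝ) < maxB T f n ω} := by
      ext ω; simp [hA]
    rw [this]
    exact MeasurableSet.iInter fun M => MeasurableSet.iUnion fun n =>
      measurableSet_lt measurable_const (hm n)
  have hmemA : ∀ ω, ω ∈ A ↔ ∀ M : ℝ, ∃ n, M < maxB T f n ω := by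
    intro ω
    constructor
    · intro hω M
      obtain ⟨N, hN⟩ := exists_nat_gt M
      obtain ⟨n, hn⟩ := hω N
      exact ⟨n, hN.trans hn⟩
    · intro hω M; exact hω M
  have hAinv : T ⁻¹' A = A := by
    ext ω
    rw [Set.mem_preimage, hmemA, hmemA]
    constructor
    · intro hω M
      obtain ⟨n, hn⟩ := hω (M - f ω)
      refine ⟨n + 1, ?_⟩
      change M < f ω + max 0 (maxB T f n (T ω))
      have := le_max_right 0 (maxB T f n (T ω))
      linarith
    · intro hω M
      obtain ⟨n, hn⟩ := hω (max M 0 + f ω)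
      have hn' := hn.trans_le (maxB_mono T f ω (Nat.le_succ n))
      change _ < f ω + max 0 (maxB T f n (T ω)) at hn'
      refine ⟨n, ?_⟩
      have h1 : max M 0 < max 0 (maxB T f n (T ω)) := by linarith
      rcases lt_max_iff.1 h1 with h2 | h2
      · exact absurd h2 (not_lt.2 (le_max_right _ _))
      · exact (le_max_left _ _).trans_lt h2
  rcases h01 A hAm hAinv with h0 | h1
  · have : ∀ᵐ ω ∂μ, ω ∉ A := measure_eq_zero_iff_ae_notMem.1 h0
    filter_upwards [this] with ω hω
    rw [hmemA] at hω
    push Not at hω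
    obtain ⟨M, hM⟩ := hω
    exact ⟨M, fun n => (le_maxB T f n ω).trans (hM n)⟩
  · exfalso
    have hAae : ∀ᵐ ω ∂μ, ω ∈ A := h1
    have hiT : ∀ n, Integrable (fun ω => maxB T f n (T ω)) μ := fun n =>
      hT.integrable_comp_of_integrable (hi n)
    have hlim : Tendsto (fun n => ∫ ω, (maxB T f (n + 1) ω - maxB T f n (T ω)) ∂μ) atTop
        (nhds (∫ ω, f ω ∂μ)) := by
      refine tendsto_integral_of_dominated_convergence (fun ω => |f ω| + |f (T ω)|) ?_ ?_ ?_ ?_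
      · exact fun n => ((hm (n+1)).sub ((hm n).comp hT.measurable)).aestronglyMeasurable
      · exact hf.abs.add (hT.integrable_comp_of_integrable hf).abs
      · refine fun n => ae_of_all _ fun ω => ?_
        have h2 : f (T ω) ≤ maxB T f n (T ω) := maxB_mono T f (T ω) (Nat.zero_le n)
        change |f ω + max 0 (maxB T f n (T ω)) - maxB T f n (T ω)| ≤ _
        have h3 := neg_abs_le (f (T ω))
        have h4 := abs_nonneg (f (T ω))
        have h5 := le_abs_self (f ω)
        have h6 := neg_abs_le (f ω)
        rw [abs_le]
        rcases le_total 0 (maxB T f n (T ω)) with h7 | h7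
        · rw [max_eq_right h7]; constructor <;> linarith
        · rw [max_eq_left h7]; constructor <;> linarith
      · filter_upwards [hAae] with ω hω
        rw [← hAinv, Set.mem_preimage, hmemA] at hω
        obtain ⟨N, hN⟩ := hω 0
        refine tendsto_const_nhds.congr' ?_
        filter_upwards [eventually_ge_atTop N] with n hn
        have h2 : 0 < maxB T f n (T ω) := hN.trans_le (maxB_mono T f (T ω) hn)
        change f ω = f ω + max 0 (maxB T f n (T ω)) - maxB T f n (T ω)
        rw [max_eq_right h2.le]; ring
    have hnn : ∀ n, 0 ≤ ∫ ω, (maxB T f (n + 1) ω - maxB T f n (T ω)) ∂μ := by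
      intro n
      rw [integral_sub (hi (n+1)) (hiT n)]
      have e : ∫ ω, maxB T f n (T ω) ∂μ = ∫ ω, maxB T f n ω ∂μ := by
        conv_rhs => rw [← hT.map_eq]
        rw [integral_map hT.measurable.aemeasurable (hm n).aestronglyMeasurable]
      rw [e, sub_nonneg]
      exact integral_mono (hi n) (hi (n+1)) fun ω => maxB_mono T f ω (Nat.le_succ n)
    exact absurd (ge_of_tendsto' hlim hnn) (not_le.2 hneg)

end maximal

section constants

lemma avg_rpow {w r : Fin k → ℝ} {δ M b L Q s : ℝ} (hδ : 0 < δ) (hw : ∀ j, δ ≤ w j)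
    (hsum : ∑ j, w j = 1) (hr0 : ∀ j, 0 ≤ r j) (hM : 0 ≤ M) (hrM : ∀ j, r j ≤ Real.exp M)
    (hb : 0 < b) (hlog : ∑ j, w j * Real.log (r j) < -b) (hL : L = (M + b) / δ)
    (hLQ : L ≤ Q) (hMQ : M ≤ Q) (hs : 0 < s) (hsQ : s * Q ≤ 1) (hsb : s * Q ^ 2 ≤ b / 2) :
    ∑ j, w j * r j ^ s ≤ 1 - s * b / 2 := by
  have hδL : δ * L = M + b := by rw [hL]; field_simp
  have hL0 : 0 ≤ L := by rw [hL]; positivity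
  have hw0 : ∀ j, 0 ≤ w j := fun j => hδ.le.trans (hw j)
  have hQ : 0 ≤ Q := hL0.trans hLQ
  set u : Fin k → ℝ := fun j => if r j ≤ Real.exp (-L) then -L else Real.log (r j) with hu
  have hru : ∀ j, r j ≤ Real.exp (u j) := by
    intro j
    simp only [hu]
    split_ifs with hj
    · exact hj
    · rw [Real.exp_log ((Real.exp_pos _).trans (not_le.1 hj))]
  have huL : ∀ j, -L ≤ u j := by
    intro j
    simp only [hu]
    split_ifs with hj
    · exact le_rfl
    · rw [Real.le_log_iff_exp_le ((Real.exp_pos _).trans (not_le.1 hj))]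
      exact (not_le.1 hj).le
  have huM : ∀ j, u j ≤ M := by
    intro j
    simp only [hu]
    split_ifs with hj
    · linarith
    · rw [Real.log_le_iff_le_exp ((Real.exp_pos _).trans (not_le.1 hj))]
      exact hrM j
  have hub : ∑ j, w j * u j ≤ -b := by
    by_cases hex : ∃ j, r j ≤ Real.exp (-L)
    · obtain ⟨j0, hj0⟩ := hex
      have e : u j0 = -L := by simp [hu, hj0]
      have h1 : ∑ j, w j * (u j - M) ≤ w j0 * (u j0 - M) := by
        have := Finset.single_le_sum (f := fun j => w j * (M - u j))
          (fun j _ => mul_nonneg (hw0 j) (sub_nonneg.2 (huM j))) (Finset.mem_univ j0)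
        have e2 : ∑ j, w j * (u j - M) = - ∑ j, w j * (M - u j) := by
          rw [← Finset.sum_neg_distrib]
          exact Finset.sum_congr rfl fun j _ => by ring
        rw [e2]; linarith
      have h2 : ∑ j, w j * (u j - M) = ∑ j, w j * u j - M := by
        simp only [mul_sub, Finset.sum_sub_distrib, ← Finset.sum_mul, hsum, one_mul]
      rw [e] at h1
      have h3 : δ * (L + M) ≤ w j0 * (L + M) := mul_le_mul_of_nonneg_right (hw j0) (by linarith)
      nlinarith [mul_nonneg hδ.le hM]
    · push Not at hex
      have : ∀ j, u j = Real.log (r j) := fun j => by simp [hu, hex j]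
      simp only [this]
      exact hlog.le
  have hterm : ∀ j, w j * r j ^ s ≤ w j * (1 + s * u j + s ^ 2 * Q ^ 2) := by
    intro j
    refine mul_le_mul_of_nonneg_left ?_ (hw0 j)
    have habs : |u j| ≤ Q := abs_le.2 ⟨by linarith [huL j], (huM j).trans hMQ⟩
    have h1 : |s * u j| ≤ 1 := by
      rw [abs_mul, abs_of_pos hs]
      exact (mul_le_mul_of_nonneg_left habs hs.le).trans hsQ
    have h2 := (le_abs_self _).trans (Real.abs_exp_sub_one_sub_id_le h1)
    have h3 : r j ^ s ≤ Real.exp (s * u j) := by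
      calc r j ^ s ≤ (Real.exp (u j)) ^ s := Real.rpow_le_rpow (hr0 j) (hru j) hs.le
        _ = _ := by rw [← Real.exp_mul, mul_comm]
    have h4 : (s * u j) ^ 2 ≤ s ^ 2 * Q ^ 2 := by
      rw [mul_pow]
      exact mul_le_mul_of_nonneg_left (sq_le_sq' (abs_le.1 habs).1 (abs_le.1 habs).2) (sq_nonneg s)
    linarith
  calc ∑ j, w j * r j ^ s ≤ ∑ j, w j * (1 + s * u j + s ^ 2 * Q ^ 2) :=
        Finset.sum_le_sum fun j _ => hterm j
    _ = (∑ j, w j) * (1 + s ^ 2 * Q ^ 2) + s * ∑ j, w j * u j := by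
        rw [Finset.sum_mul, Finset.mul_sum, ← Finset.sum_add_distrib]
        exact Finset.sum_congr rfl fun j _ => by ring
    _ ≤ 1 - s * b / 2 := by
        rw [hsum]
        nlinarith [mul_le_mul_of_nonneg_left hub hs.le, mul_le_mul_of_nonneg_left hsb hs.le]

lemma exists_hyp {E : Type*} [NormedAddCommGroup E] [NormedSpace ℝ E]
    {α : ℝ≥0} (hα0 : 0 < α) (hα1 : α ≤ 1)
    {h : Fin k → E → E} {p : Fin k → E → ℝ}
    (hsmooth : ∀ i, ContDiff ℝ 1 (h i))
    (hlogbdd : ∃ M : ℝ, ∀ i x, |Real.log ‖fderiv ℝ (h i) x‖| ≤ M)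
    (hpholder : ∀ i, ∃ C : ℝ≥0, HolderWith C α (p i))
    (hprange : ∀ i x, p i x ∈ Set.Ioo (0 : ℝ) 1)
    (hpbelow : ∃ δ > (0 : ℝ), ∀ i x, δ ≤ p i x)
    (hpsum : ∀ x, ∑ i, p i x = 1)
    (hcoa : ∃ b > (0 : ℝ), ∀ x y, x ≠ y →
      ∑ j, p j x * Real.log (dist (h j x) (h j y) / dist x y) < -b) :
    ∃ s ρ C δ : ℝ, Hyp h p s ρ C δ := by
  obtain ⟨M0, hM0⟩ := hlogbdd
  obtain ⟨δ, hδ, hpδ⟩ := hpbelow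
  obtain ⟨b, hb, hcoa⟩ := hcoa
  choose Cp hCp using hpholder
  set M : ℝ := max M0 0 with hMdef
  have hM : 0 ≤ M := le_max_right _ _
  have hlip : ∀ j x y, dist (h j x) (h j y) ≤ Real.exp M * dist x y := by
    intro j
    have := lipschitzWith_of_nnnorm_fderiv_le (𝕜 := ℝ) (f := h j) (C := (Real.exp M).toNNReal)
      ((hsmooth j).differentiable (by norm_num)) (fun x => by
        rw [← NNReal.coe_le_coe, coe_nnnorm, Real.coe_toNNReal _ (Real.exp_pos M).le]
        rcases (norm_nonneg (fderiv ℝ (h j) x)).eq_or_lt with h0 | h0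
        · rw [← h0]; exact (Real.exp_pos M).le
        · rw [← Real.log_le_iff_le_exp h0]
          exact ((le_abs_self _).trans (hM0 j x)).trans (le_max_left _ _))
    intro x y
    have h1 := this.dist_le_mul x y
    rwa [Real.coe_toNNReal _ (Real.exp_pos M).le] at h1
  set L : ℝ := (M + b) / δ with hL
  set Q : ℝ := max L M + 1 with hQdef
  have hLQ : L ≤ Q := (le_max_left L M).trans (by linarith)
  have hMQ : M ≤ Q := (le_max_right L M).trans (by linarith)
  have hQ : 0 < Q := by have := le_max_right L M; linarith
  set s : ℝ := min (α : ℝ) (min (1 / Q) (b / 2 / Q ^ 2)) with hs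
  have hα : (0 : ℝ) < α := by exact_mod_cast hα0
  have hspos : 0 < s := lt_min hα (lt_min (by positivity) (by positivity))
  have hsα : s ≤ α := min_le_left _ _
  have hsQ : s * Q ≤ 1 := by
    rw [← le_div_iff₀ hQ]; exact (min_le_right _ _).trans (min_le_left _ _)
  have hsb : s * Q ^ 2 ≤ b / 2 := by
    rw [← le_div_iff₀ (by positivity)]; exact (min_le_right _ _).trans (min_le_right _ _)
  have hdist : ∀ j x y, |p j x - p j y| ≤ Cp j * dist x y ^ (α : ℝ) := fun j x y => by
    rw [← Real.dist_eq]; exact (hCp j).dist_le x y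
  refine ⟨s, max (1 - s * b / 2) 0, 1 + ∑ j, (Cp j : ℝ), δ, ?_⟩
  refine ⟨fun j => (hsmooth j).continuous, fun j => (hCp j).continuous hα0, hspos,
    hsα.trans (by exact_mod_cast hα1), le_max_right _ _, ?_, by positivity, hδ, hpδ, hpsum, ?_, ?_⟩
  · exact max_lt (by have := mul_pos hspos hb; linarith) one_pos
  · intro j x y
    have hCj : (Cp j : ℝ) ≤ ∑ j, (Cp j : ℝ) :=
      Finset.single_le_sum (f := fun j => (Cp j : ℝ)) (fun j _ => (Cp j).2) (Finset.mem_univ j)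
    have hS0 : (0 : ℝ) ≤ ∑ j, (Cp j : ℝ) := (Cp j).2.trans hCj
    rcases le_total (dist x y) 1 with hd | hd
    · refine (hdist j x y).trans (mul_le_mul (by linarith) ?_ (by positivity) (by linarith))
      exact Real.rpow_le_rpow_of_exponent_ge_of_imp dist_nonneg hd hsα
        (fun _ h0 => absurd h0 hα.ne')
    · have h1 : 1 ≤ dist x y ^ s := Real.one_le_rpow hd hspos.le
      have h2 : |p j x - p j y| ≤ 1 := by
        have := hprange j x
        have := hprange j y
        rw [abs_le]; constructor <;> linarith [(hprange j x).1, (hprange j x).2, (hprange j y).1, (hprange j y).2]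
      refine h2.trans ?_
      nlinarith
  · intro x y
    rcases eq_or_ne x y with rfl | hxy
    · simp [Real.zero_rpow hspos.ne']
    · have hd : 0 < dist x y := dist_pos.2 hxy
      have key := avg_rpow (w := fun j => p j x) (r := fun j => dist (h j x) (h j y) / dist x y)
        hδ (fun j => hpδ j x) (hpsum x) (fun j => by positivity) hM
        (fun j => by rw [div_le_iff₀ hd]; exact hlip j x y) hb (hcoa x y hxy) hL hLQ hMQ hspos hsQ hsb
      have e : ∑ j, p j x * dist (h j x) (h j y) ^ s =
          (∑ j, p j x * (dist (h j x) (h j y) / dist x y) ^ s) * dist x y ^ s := by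
        rw [Finset.sum_mul]
        refine Finset.sum_congr rfl fun j _ => ?_
        rw [mul_assoc, ← Real.mul_rpow (by positivity) hd.le, div_mul_cancel₀ _ hd.ne']
      rw [e]
      exact mul_le_mul_of_nonneg_right (key.trans (le_max_left _ _)) (by positivity)

end constants

section assembling

lemma iter_rev_aux {X : Type*} [MetricSpace X] (h : Fin k → X → X) (p : Fin k → X → ℝ) (n : ℕ) :
    ∀ (ω τ : ℕ → Fin k), (∀ i < n, τ i = ω (n - 1 - i)) → ∀ x,
      hIter h τ n x = hIterRev h ω n x ∧ pIter h p τ n x = pR h p n ω x := by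
  induction n with
  | zero => intro ω τ _ x; exact ⟨rfl, rfl⟩
  | succ n ih =>
    intro ω τ hτ x
    have h0 : τ n = ω 0 := by rw [hτ n (Nat.lt_succ_self n)]; congr 1; omega
    obtain ⟨e1, e2⟩ := ih (shS ω) τ (fun i hi => by
      rw [hτ i (by omega)]; unfold shS; congr 1; omega) x
    constructor
    · rw [hIterRev_succ]
      change h (τ n) (hIter h τ n x) = _
      rw [h0, e1]
    · change pIter h p τ n x * p (τ n) (hIter h τ n x) = pR h p n (shS ω) x * _
      rw [h0, e1, e2]

lemma shS_iterate (n : ℕ) : ∀ ω : ℕ → Fin k, shS^[n] ω = fun i => ω (i + n) := by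
  induction n with
  | zero => intro ω; rfl
  | succ n ih =>
    intro ω
    rw [Function.iterate_succ_apply, ih]
    funext i
    simp only [shS]
    congr 1

lemma zIterRev_eq {X : Type*} (h : Fin k → X → X) (z : Fin k → X → ℝ)
    (π : (ℕ → Fin k) → X) (f : (ℕ → Fin k) → ℝ) (ω : ℕ → Fin k)
    (hsh : ∀ i, π (shS^[i] ω) = h (ω i) (π (shS^[i + 1] ω)))
    (hf : ∀ i, f (shS^[i] ω) = z (ω i) (π (shS^[i + 1] ω))) (n : ℕ) :
    zIterRev h z ω n (π (shS^[n] ω)) = birkhoffSum shS f n ω := by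
  induction n with
  | zero => simp [zIterRev]
  | succ n ih =>
    rw [birkhoffSum_succ, ← ih, hf n]
    change z (ω n) _ + zIterRev h z ω n (h (ω n) _) = _
    rw [← hsh n, add_comm]

end assembling
/-- Birkhoff-type estimate along backward orbits: for `μ₋`-almost every `ω` the ergodic
sums `z_{ω^{-n}}(π(σ^n ω))` grow like `nz`. -/
theorem backward_ergodic_sums_estimate
    (d : ℕ) (hd : 1 ≤ d) (hk : 2 ≤ k) (α : ℝ≥0) (hα0 : 0 < α) (hα1 : α ≤ 1)
    (h : Fin k → EuclideanSpace ℝ (Fin d) → EuclideanSpace ℝ (Fin d))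
    (p : Fin k → EuclideanSpace ℝ (Fin d) → ℝ)
    (hsmooth : ∀ i, ContDiff ℝ 1 (h i))
    (hholder : ∀ i, ∃ C : ℝ≥0, HolderWith C α fun x => Real.log ‖fderiv ℝ (h i) x‖)
    (hlogbdd : ∃ M : ℝ, ∀ i x, |Real.log ‖fderiv ℝ (h i) x‖| ≤ M)
    (hpholder : ∀ i, ∃ C : ℝ≥0, HolderWith C α (p i))
    (hprange : ∀ i x, p i x ∈ Set.Ioo (0 : ℝ) 1)
    (hpbelow : ∃ δ > (0 : ℝ), ∀ i x, δ ≤ p i x)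
    (hpsum : ∀ x, ∑ i, p i x = 1)
    (hcoa : ∃ b > (0 : ℝ), ∀ x y, x ≠ y →
      ∑ j, p j x * Real.log (dist (h j x) (h j y) / dist x y) < -b)
    (ν : Measure (EuclideanSpace ℝ (Fin d))) [IsProbabilityMeasure ν]
    (hinv : ν = ∑ i, Measure.map (h i)
      (ν.withDensity fun x => ENNReal.ofReal (p i x)))
    -- the family of measures `p_x` on the symbol space
    (P : EuclideanSpace ℝ (Fin d) → Measure (ℕ → Fin k))
    (hPprob : ∀ x, IsProbabilityMeasure (P x))
    (hPcyl : ∀ x ω n, P x (cyl ω n) = ENNReal.ofReal (pIter h p ω n x))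
    -- the measure `μ₋`, determined by `μ₋(C_{ω^n}) = μ₊(C_{ω^{-n}})`,
    -- where `μ₊(E) = ∫ p_x(E) dν(x)`
    (μm : Measure (ℕ → Fin k)) [IsProbabilityMeasure μm]
    (hμminv : Measure.map (fun (ω : ℕ → Fin k) i => ω (i + 1)) μm = μm)
    (hμmcyl : ∀ ω n, μm (cyl ω n) = ∫⁻ x, P x (cylRev ω n) ∂ν)
    -- the coding map, defined `μ₋`-a.e.
    (x₀ : EuclideanSpace ℝ (Fin d)) (π : (ℕ → Fin k) → EuclideanSpace ℝ (Fin d))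
    (hπ : ∀ᵐ ω ∂μm, Tendsto (fun n => hIterRev h ω n x₀) atTop (nhds (π ω)))
    -- the observables
    (z : Fin k → EuclideanSpace ℝ (Fin d) → ℝ)
    (hzint : ∀ j, Integrable (z j) ν)
    (hzneg : (∫ x, ∑ j, p j x * z j x ∂ν) < 0) :
    ∀ ε > (0 : ℝ), ∀ᵐ ω ∂μm, ∃ K > (0 : ℝ), ∀ n : ℕ, 1 ≤ n →
      K⁻¹ * Real.exp ((n : ℝ) * (1 + ε) * (∫ x, ∑ j, p j x * z j x ∂ν))
          ≤ Real.exp (zIterRev h z ω n (π fun i => ω (i + n))) ∧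
      Real.exp (zIterRev h z ω n (π fun i => ω (i + n)))
          ≤ K * Real.exp ((n : ℝ) * (1 - ε) * (∫ x, ∑ j, p j x * z j x ∂ν)) := by
  obtain ⟨s, ρ, C, δ, H⟩ := exists_hyp hα0 hα1 hsmooth hlogbdd hpholder hprange hpbelow hpsum hcoa
  intro ε hε
  set Z : ℝ := ∫ x, ∑ j, p j x * z j x ∂ν with hZ
  have ω₀ : ℕ → Fin k := fun _ => ⟨0, by omega⟩
  -- cylinder formula
  have hcyl : ∀ ω n, μm.real (cyl ω n) = ∫ x, pR h p n ω x ∂ν := by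
    intro ω n
    have hP : ∀ x, P x (cylRev ω n) = ENNReal.ofReal (pR h p n ω x) := by
      intro x
      have := hPcyl x (fun i => ω (n - 1 - i)) n
      rw [(iter_rev_aux h p n ω (fun i => ω (n - 1 - i)) (fun i _ => rfl) x).2] at this
      exact this
    rw [Measure.real, hμmcyl]
    simp only [hP]
    rw [integral_eq_lintegral_of_nonneg_ae (ae_of_all _ fun x => (H.pR_mem ω n x).1)
      (H.pR_cont ω n).aestronglyMeasurable]
  have hmp : MeasurePreserving (shS : (ℕ → Fin k) → ℕ → Fin k) μm μm :=
    ⟨continuous_shS.measurable, hμminv⟩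
  -- measurable version of the coding map
  have hπae : AEMeasurable π μm := aemeasurable_of_tendsto_metrizable_ae'
    (fun n => (measurable_hIterRev_seq n x₀).aemeasurable) hπ
  obtain ⟨π', hπ'm, hππ'⟩ := hπae
  have hπ' : ∀ᵐ ω ∂μm, Tendsto (fun n => hIterRev h ω n x₀) atTop (nhds (π' ω)) := by
    filter_upwards [hπ, hππ'] with ω h1 h2
    rwa [← h2]
  have hS := H.stat hcyl hπ'm hπ' ω₀
  have hlaw := H.law hcyl hinv hπ'm hπ' ω₀
  have hsh := H.pi_shift hmp hπ'
  have h01 : ∀ E : Set (ℕ → Fin k), MeasurableSet E → shS ⁻¹' E = E → μm E = 0 ∨ μm Eᶜ = 0 :=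
    fun E hE hinvE => H.zero_one hπ'm hS hsh ω₀ hE hinvE
  -- measurable versions of the observables
  have hz' : ∀ j, ∃ g : EuclideanSpace ℝ (Fin d) → ℝ, Measurable g ∧ z j =ᵐ[ν] g := fun j =>
    ⟨_, (hzint j).1.stronglyMeasurable_mk.measurable, (hzint j).1.ae_eq_mk⟩
  choose z' hz'm hzz' using hz'
  have hz'int : ∀ j, Integrable (z' j) ν := fun j => (hzint j).congr (hzz' j)
  have hzπ : ∀ᵐ ω ∂μm, ∀ j, z j (π' ω) = z' j (π' ω) := by
    rw [ae_all_iff]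
    intro j
    have := hzz' j
    rw [← hlaw] at this
    exact ae_of_ae_map hπ'm.aemeasurable this
  set f : (ℕ → Fin k) → ℝ := fun ω => z' (ω 0) (π' (shS ω)) with hf
  have hfm : Measurable f := by
    have h1 : Measurable fun q : Fin k × EuclideanSpace ℝ (Fin d) => z' q.1 q.2 :=
      measurable_from_prod_countable_right fun j => hz'm j
    exact h1.comp ((measurable_pi_apply 0).prodMk (hπ'm.comp continuous_shS.measurable))
  have hmpπ : MeasurePreserving π' μm ν := ⟨hπ'm, hlaw⟩
  have hfc : ∀ j, Integrable (fun ω => f (consS j ω)) μm := fun j =>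
    hmpπ.integrable_comp_of_integrable (hz'int j)
  obtain ⟨hfi, hfint⟩ := H.integral_rhs hπ'm hfm hfc
  rw [← hS] at hfi hfint
  have hfZ : ∫ ω, f ω ∂μm = Z := by
    rw [hfint, hZ, integral_finsetSum]
    · refine Finset.sum_congr rfl fun j _ => ?_
      have h1 : ∫ ω, p j (π' ω) * f (consS j ω) ∂μm = ∫ x, p j x * z' j x ∂(Measure.map π' μm) := by
        exact (integral_map hπ'm.aemeasurable
          ((H.pcont j).measurable.mul (hz'm j)).aestronglyMeasurable).symm
      rw [h1, hlaw]
      refine integral_congr_ae ?_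
      filter_upwards [hzz' j] with x hx
      rw [hx]
    · intro j _
      refine (hzint j).bdd_mul (c := 1) (H.pcont j).aestronglyMeasurable (ae_of_all _ fun x => ?_)
      rw [Real.norm_eq_abs, abs_of_pos (H.ppos j x)]
      exact H.ple j x
  -- orbit identities
  have horb : ∀ᵐ ω ∂μm, ∀ i, π (shS^[i] ω) = π' (shS^[i] ω) ∧
      π' (shS^[i] ω) = h (shS^[i] ω 0) (π' (shS (shS^[i] ω))) ∧
      ∀ j, z j (π' (shS^[i] ω)) = z' j (π' (shS^[i] ω)) := by
    rw [ae_all_iff]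
    intro i
    exact (hmp.iterate i).quasiMeasurePreserving.ae (hππ'.and (hsh.and hzπ))
  have hεZ : ε * Z < 0 := mul_neg_of_pos_of_neg hε hzneg
  have hb1 := birkhoff_bdd hmp h01 (f := fun ω => f ω - (1 - ε) * Z) (hfm.sub_const _)
    (hfi.sub (integrable_const _)) (by
      rw [integral_sub hfi (integrable_const _), hfZ]
      simp only [integral_const, probReal_univ, one_smul]; linarith)
  have hb2 := birkhoff_bdd hmp h01 (f := fun ω => (1 + ε) * Z - f ω) (measurable_const.sub hfm)
    ((integrable_const _).sub hfi) (by
      rw [integral_sub (integrable_const _) hfi, hfZ]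
      simp only [integral_const, probReal_univ, one_smul]; linarith)
  filter_upwards [horb, hb1, hb2] with ω ho ⟨M1, hM1⟩ ⟨M2, hM2⟩
  have hidx : ∀ i, shS^[i] ω 0 = ω i := fun i => by rw [shS_iterate]; simp
  have hsum : ∀ n, zIterRev h z ω n (π fun i => ω (i + n)) = birkhoffSum shS f n ω := by
    intro n
    rw [← shS_iterate, (ho n).1]
    refine zIterRev_eq h z π' f ω (fun i => ?_) (fun i => ?_) n
    · have := (ho i).2.1
      rwa [hidx, ← Function.iterate_succ_apply' shS] at this
    · have := (ho (i + 1)).2.2 (ω i)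
      rw [this, Function.iterate_succ_apply']
      simp only [hf, hidx]
  refine ⟨Real.exp (max M1 M2), Real.exp_pos _, fun n hn => ?_⟩
  obtain ⟨m, rfl⟩ : ∃ m, n = m + 1 := ⟨n - 1, by omega⟩
  rw [hsum, ← Real.exp_neg, ← Real.exp_add, ← Real.exp_add, Real.exp_le_exp, Real.exp_le_exp]
  have e1 : birkhoffSum shS (fun ω => f ω - (1 - ε) * Z) (m + 1) ω =
      birkhoffSum shS f (m + 1) ω - ((m + 1 : ℕ) : ℝ) * (1 - ε) * Z := by
    simp only [birkhoffSum, Finset.sum_sub_distrib, Finset.sum_const, Finset.card_range,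
      nsmul_eq_mul]
    ring
  have e2 : birkhoffSum shS (fun ω => (1 + ε) * Z - f ω) (m + 1) ω =
      ((m + 1 : ℕ) : ℝ) * (1 + ε) * Z - birkhoffSum shS f (m + 1) ω := by
    simp only [birkhoffSum, Finset.sum_sub_distrib, Finset.sum_const, Finset.card_range,
      nsmul_eq_mul]
    ring
  have k1 := hM1 m
  have k2 := hM2 m
  rw [e1] at k1
  rw [e2] at k2
  constructor
  · linarith [le_max_right M1 M2]
  · linarith [le_max_left M1 M2]
end
end
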